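/- arXiv:2101.07665 — 3 statements merged into one kernel-verified Lean document; each statement's English description precedes it below -/
import Mathlib

section
/- Let φ_t be the flow of a smooth Hamiltonian H on an open set U ⊂ ℝ^{2n} with exact symplectic structure, let ω ∈ ℝ^{n−2}, T > 0, χ ∈ ℝ, and let K : 𝕋^{n−2} → U satisfy φ_T(K(θ)) = K(θ + ω), and W : 𝕋^{n−2} → ℝ^{2n} satisfy Dφ_T(K(θ)) W(θ) = e^{Tχ} W(θ + ω) for all θ. Then the map Ŵ defined for (θ, θ_d) ∈ ℝ^{n−2} × ℝ by Ŵ(θ, θ_d) = e^{−θ_d T χ} Dφ_{θ_d T}(K(θ − θ_d ω)) W(θ − θ_d ω) descends to a well-defined map Ŵ : 𝕋^{n−1} → ℝ^{2n}, and it satisfies the linearized-flow invariance equation Dφ_t(K̂(θ̂)) Ŵ(θ̂) = e^{tχ} Ŵ(θ̂ + t ω̂) for all θ̂ ∈ 𝕋^{n−1} and t ∈ ℝ, where K̂(θ, θ_d) = φ_{θ_d T}(K(θ − θ_d ω)) and ω̂ = (1/T)(ω, 1). -/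
/-!
The claim is a consequence of the cocycle property
`Dφ_{t+s}(z) = Dφ_t(φ_s z) Dφ_s(z)` (`fderiv_flow_add`). Invariance under the flow is the cocycle
property at `z = K(θ - sω)`. Periodicity in `s` is the cocycle property for the times `sT` and `T`,
combined with the invariance equations of `K` and `W`; the factor `e^{Tχ}` cancels against the
exponential prefactor. Periodicity in `θ` is inherited from `K` and `W`.

The substance is that the flow is differentiable in the initial point, since `fderiv` carries no
information otherwise. The Hamiltonian field is `C¹` on `U` by Cramer's rule
(`contDiffOn_hamiltonian_field`). For short times, differentiability follows by comparing nearby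
trajectories with the solution of the variational equation through Grönwall's inequality
(`flow_differentiableAt_short`). The group law (`flow_add`) then makes the set of times at which
`φ_t` is differentiable at `z` clopen in `ℝ`, hence everything (`flow_differentiableAt`).
-/

open Matrix MeasureTheory

noncomputable section

/-- Jacobian matrix of a map between finite-dimensional real coordinate spaces. -/
def jacobian {ι κ : Type*} [Fintype ι] [DecidableEq ι] [Fintype κ]
    (f : (ι → ℝ) → (κ → ℝ)) (x : ι → ℝ) : Matrix κ ι ℝ :=
  Matrix.of fun i j => fderiv ℝ f x (Pi.single j 1) i

/-- Row differential of a scalar function. -/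
def drow {ι : Type*} [Fintype ι] [DecidableEq ι]
    (f : (ι → ℝ) → ℝ) (x : ι → ℝ) : ι → ℝ :=
  fun j => fderiv ℝ f x (Pi.single j 1)

/-- A map on `ℝ^ℓ` is `1`-periodic in each variable (i.e. descends to the torus `𝕋^ℓ`). -/
def ZPeriodic {ℓ : ℕ} {α : Type*} (f : (Fin ℓ → ℝ) → α) : Prop :=
  ∀ (θ : Fin ℓ → ℝ) (k : Fin ℓ → ℤ), f (θ + fun i => (k i : ℝ)) = f θ

section FlowDerivative

open Set Metric Filter Topology

variable {E : Type*} [NormedAddCommGroup E] [NormedSpace ℝ E]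

/-! ### Differentiability of a flow for short times -/

/-- A `C¹` map is uniformly strictly differentiable on a compact convex subset of its domain. -/
lemma uniform_linear_approx {U S : Set E} (hU : IsOpen U) {X : E → E}
    (hX : ContDiffOn ℝ 1 X U) (hSU : S ⊆ U) (hS : IsCompact S) (hSc : Convex ℝ S)
    {η : ℝ} (hη : 0 < η) :
    ∃ δ > 0, ∀ p ∈ S, ∀ q ∈ S, ‖p - q‖ ≤ δ →
      ‖X p - X q - fderiv ℝ X q (p - q)‖ ≤ η * ‖p - q‖ := by
  have huc : UniformContinuousOn (fderiv ℝ X) S :=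
    hS.uniformContinuousOn_of_continuous
      ((hX.continuousOn_fderiv_of_isOpen hU le_rfl).mono hSU)
  obtain ⟨δ, hδ, h⟩ := Metric.uniformContinuousOn_iff.1 huc η hη
  refine ⟨δ / 2, by positivity, fun p hp q hq hpq => ?_⟩
  refine (hSc.inter (convex_closedBall q (δ / 2))).norm_image_sub_le_of_norm_hasFDerivWithin_le'
    (f := X) (f' := fderiv ℝ X) (φ := fderiv ℝ X q) (C := η) (x := q) (y := p) ?_ ?_
    ⟨hq, mem_closedBall_self (by positivity)⟩ ⟨hp, by rwa [mem_closedBall, dist_eq_norm]⟩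
  · intro x hx
    exact ((hX.differentiableOn one_ne_zero).differentiableAt
      (hU.mem_nhds (hSU hx.1))).hasFDerivAt.hasFDerivWithinAt
  · intro x hx
    rw [← dist_eq_norm]
    refine (h x hx.1 q hq ?_).le
    have := hx.2
    rw [mem_closedBall] at this
    linarith

/-- Trajectories starting near `z` stay in a ball on which the speed is `< C` for a time
controlled by `C`. -/
lemma trajectory_mem_closedBall {X : E → E} {γ : ℝ → E} {z : E} {r C ε : ℝ}
    (hb : ∀ x ∈ closedBall z (2 * r), ‖X x‖ < C) (hC : 0 < C) (hCε : C * ε ≤ r)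
    (hγ : ∀ t, HasDerivAt γ (X (γ t)) t) (h0 : γ 0 ∈ closedBall z r) :
    ∀ t ∈ Icc 0 ε, γ t ∈ closedBall z (2 * r) := by
  have key : ∀ t, t ∈ Icc 0 ε → ‖γ t - γ 0‖ ≤ C * t → γ t ∈ closedBall z (2 * r) := by
    intro t ht h
    rw [mem_closedBall, dist_eq_norm] at *
    have h1 : C * t ≤ C * ε := by gcongr; exact ht.2
    have h2 := norm_sub_le_norm_sub_add_norm_sub (γ t) (γ 0) z
    linarith
  intro t ht
  refine key t ht ?_
  refine image_norm_le_of_norm_deriv_right_lt_deriv_boundary (a := 0) (b := ε)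
    (f := fun t => γ t - γ 0) (f' := fun t => X (γ t)) (B := fun t => C * t) (B' := fun _ => C)
    ?_ ?_ ?_ ?_ ?_ ht
  · exact HasDerivAt.continuousOn (f' := fun t => X (γ t)) fun s _ => (hγ s).sub_const _
  · exact fun s _ => ((hγ s).sub_const _).hasDerivWithinAt
  · simp
  · intro s
    simpa using (hasDerivAt_id s).const_mul C
  · intro s hs h
    exact hb _ (key s ⟨hs.1, hs.2.le⟩ h.le)

/-- The operator-valued linear equation `V' = A(t) V`, `V(0) = 1`, is solvable for short times. -/
lemma exists_fundamental_solution [CompleteSpace E] {A : ℝ → E →L[ℝ] E} {C ε : ℝ}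
    (hC : 0 < C) (hε : 0 < ε) (hCε : 2 * C * ε ≤ 1)
    (hA : ContinuousOn A (Icc 0 ε)) (hAC : ∀ t ∈ Icc 0 ε, ‖A t‖ ≤ C) :
    ∃ V : ℝ → E →L[ℝ] E, V 0 = ContinuousLinearMap.id ℝ E ∧
      ∀ t ∈ Icc 0 ε, HasDerivWithinAt V ((A t).comp (V t)) (Icc 0 ε) t := by
  have hP : IsPicardLindelof (fun t (V : E →L[ℝ] E) => (A t).comp V) (tmin := 0) (tmax := ε)
      ⟨0, le_rfl, hε.le⟩ (ContinuousLinearMap.id ℝ E) 1 0 ⟨2 * C, by positivity⟩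
      ⟨C, hC.le⟩ := by
    refine ⟨?_, ?_, ?_, ?_⟩
    · intro t ht
      refine LipschitzWith.lipschitzOnWith (LipschitzWith.of_dist_le_mul fun V V' => ?_)
      rw [dist_eq_norm, dist_eq_norm, ← ContinuousLinearMap.comp_sub]
      exact (ContinuousLinearMap.opNorm_comp_le _ _).trans
        (mul_le_mul_of_nonneg_right (hAC t ht) (norm_nonneg _))
    · intro V _
      exact hA.clm_comp continuousOn_const
    · intro t ht V hV
      have hV2 : ‖V‖ ≤ 2 := by
        rw [mem_closedBall, dist_eq_norm] at hV
        have h1 := norm_le_norm_sub_add V (ContinuousLinearMap.id ℝ E)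
        have h2 : ‖ContinuousLinearMap.id ℝ E‖ ≤ 1 := ContinuousLinearMap.norm_id_le
        norm_num at hV
        linarith
      calc ‖(A t).comp V‖ ≤ ‖A t‖ * ‖V‖ := ContinuousLinearMap.opNorm_comp_le _ _
        _ ≤ C * 2 := mul_le_mul (hAC t ht) hV2 (norm_nonneg _) hC.le
        _ = 2 * C := mul_comm _ _
    · change 2 * C * max (ε - 0) (0 - 0) ≤ ((1 : NNReal) : ℝ) - ((0 : NNReal) : ℝ)
      simpa [max_eq_left hε.le] using hCε
  exact hP.exists_eq_forall_mem_Icc_hasDerivWithinAt₀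

/-- Differentiability of `φ s` in the initial point, locally uniformly for short forward times.
The derivative is the solution `V` of the variational equation `V' = DX(φ_t y) V`, `V(0) = 1`:
`e(t) = φ_t(y + u) - φ_t(y) - V(t) u` satisfies `‖e'‖ ≤ C ‖e‖ + o(‖u‖)`, and Grönwall's inequality
gives `e = o(u)`. -/
lemma flow_differentiableAt_short_forward [FiniteDimensional ℝ E] {U : Set E} (hU : IsOpen U)
    {X : E → E} (hX : ContDiffOn ℝ 1 X U) {φ : ℝ → E → E} (hφ0 : ∀ z ∈ U, φ 0 z = z)
    (hφ : ∀ z ∈ U, ∀ t, HasDerivAt (fun s => φ s z) (X (φ t z)) t) {z : E} (hz : z ∈ U) :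
    ∃ ε > 0, ∃ r > 0, ∀ y ∈ ball z r, ∀ s ∈ Icc 0 ε, DifferentiableAt ℝ (φ s) y := by
  obtain ⟨ρ, hρ, hρU⟩ := Metric.nhds_basis_closedBall.mem_iff.1 (hU.mem_nhds hz)
  obtain ⟨r, hr, rfl⟩ : ∃ r > 0, 2 * r = ρ := ⟨ρ / 2, by positivity, by ring⟩
  set S := closedBall z (2 * r) with hS
  have hScomp : IsCompact S := isCompact_closedBall _ _
  have hDX : ContinuousOn (fderiv ℝ X) S :=
    (hX.continuousOn_fderiv_of_isOpen hU le_rfl).mono hρU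
  obtain ⟨C₁, hC₁⟩ := hScomp.exists_bound_of_continuousOn (hX.continuousOn.mono hρU)
  obtain ⟨C₂, hC₂⟩ := hScomp.exists_bound_of_continuousOn hDX
  obtain ⟨C, hC, hXC, hDC⟩ : ∃ C > 0, (∀ x ∈ S, ‖X x‖ < C) ∧ ∀ x ∈ S, ‖fderiv ℝ X x‖ ≤ C := by
    refine ⟨max (max C₁ C₂) 0 + 1, by positivity, fun x hx => ?_, fun x hx => ?_⟩
    · have := hC₁ x hx
      have := le_max_left C₁ C₂
      have := le_max_left (max C₁ C₂) 0
      linarith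
    · have := hC₂ x hx
      have := le_max_right C₁ C₂
      have := le_max_left (max C₁ C₂) 0
      linarith
  obtain ⟨ε, hε, hCr, hC1⟩ : ∃ ε > 0, C * ε ≤ r ∧ 2 * C * ε ≤ 1 := by
    refine ⟨min (r / C) (1 / (2 * C)), by positivity, ?_, ?_⟩
    · calc C * _ ≤ C * (r / C) := by gcongr; exact min_le_left _ _
        _ = r := by field_simp
    · calc 2 * C * _ ≤ 2 * C * (1 / (2 * C)) := by gcongr; exact min_le_right _ _
        _ = 1 := by field_simp
  have hrS : ball z r ⊆ S :=
    ball_subset_closedBall.trans (closedBall_subset_closedBall (by linarith))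
  have hstay : ∀ y ∈ ball z r, ∀ t ∈ Icc 0 ε, φ t y ∈ S := fun y hy =>
    trajectory_mem_closedBall hXC hC hCr (hφ y (hρU (hrS hy)))
      (by rw [hφ0 y (hρU (hrS hy))]; exact ball_subset_closedBall hy)
  have hLip : ∀ p ∈ S, ∀ q ∈ S, ‖X p - X q‖ ≤ C * ‖p - q‖ := fun p hp q hq =>
    (convex_closedBall z (2 * r)).norm_image_sub_le_of_norm_fderiv_le
      (fun x hx => (hX.differentiableOn one_ne_zero).differentiableAt (hU.mem_nhds (hρU hx)))
      hDC hq hp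
  have hcont : ∀ y ∈ ball z r, Continuous fun t => φ t y := fun y hy =>
    continuous_iff_continuousAt.2 fun t => (hφ y (hρU (hrS hy)) t).continuousAt
  -- Lipschitz dependence on the initial point
  have hdist : ∀ y ∈ ball z r, ∀ y' ∈ ball z r, ∀ t ∈ Icc 0 ε,
      ‖φ t y' - φ t y‖ ≤ ‖y' - y‖ * Real.exp (C * ε) := by
    intro y hy y' hy' t ht
    have := norm_le_gronwallBound_of_norm_deriv_right_le (a := 0) (b := ε)
      (f := fun t => φ t y' - φ t y) (f' := fun t => X (φ t y') - X (φ t y))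
      (δ := ‖y' - y‖) (K := C) (ε := 0)
      ((hcont y' hy').sub (hcont y hy)).continuousOn
      (fun s _ => ((hφ y' (hρU (hrS hy')) s).sub (hφ y (hρU (hrS hy)) s)).hasDerivWithinAt)
      (by rw [hφ0 y (hρU (hrS hy)), hφ0 y' (hρU (hrS hy'))])
      (fun s hs => by
        rw [add_zero]
        exact hLip _ (hstay y' hy' s ⟨hs.1, hs.2.le⟩) _ (hstay y hy s ⟨hs.1, hs.2.le⟩)) t ht
    rw [gronwallBound_ε0, sub_zero] at this
    refine this.trans ?_
    gcongr
    exact ht.2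
  refine ⟨ε, hε, r, hr, fun y hy s hs => ?_⟩
  obtain ⟨V, hV0, hV⟩ := exists_fundamental_solution (A := fun t => fderiv ℝ X (φ t y)) hC hε hC1
    (hDX.comp (hcont y hy).continuousOn (hstay y hy)) (fun t ht => hDC _ (hstay y hy t ht))
  suffices HasFDerivAt (φ s) (V s) y from this.differentiableAt
  rw [hasFDerivAt_iff_isLittleO_nhds_zero, Asymptotics.isLittleO_iff]
  intro c hc
  set M := Real.exp (C * ε) with hM
  have hMpos : 0 < M := Real.exp_pos _
  -- `η` is chosen so that the Grönwall bound `η M (exp (C s) - 1) / C` is at most `c`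
  obtain ⟨δ, hδ, happ⟩ := uniform_linear_approx hU hX hρU hScomp (convex_closedBall z (2 * r))
    (η := c * C / (M * M)) (by positivity)
  have hn1 : ∀ᶠ u in 𝓝 (0 : E), y + u ∈ ball z r := by
    have : Tendsto (fun u : E => y + u) (𝓝 0) (𝓝 y) := by
      have hc : Continuous fun u : E => y + u := by fun_prop
      simpa using hc.tendsto 0
    exact this.eventually (isOpen_ball.mem_nhds hy)
  have hn2 : ∀ᶠ u in 𝓝 (0 : E), ‖u‖ ≤ δ / M := by
    filter_upwards [closedBall_mem_nhds (0 : E) (show 0 < δ / M by positivity)] with u hu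
    simpa using hu
  filter_upwards [hn1, hn2] with u hu1 hu2
  have hd : ∀ t ∈ Icc 0 ε, ‖φ t (y + u) - φ t y‖ ≤ ‖u‖ * M := fun t ht => by
    simpa using hdist y hy (y + u) hu1 t ht
  have huM : ‖u‖ * M ≤ δ := by rwa [le_div_iff₀ hMpos] at hu2
  have hVcont : ContinuousOn V (Icc 0 ε) := fun t ht => (hV t ht).continuousWithinAt
  have hg := norm_le_gronwallBound_of_norm_deriv_right_le (a := 0) (b := ε)
      (f := fun t => φ t (y + u) - φ t y - V t u)
      (f' := fun t => X (φ t (y + u)) - X (φ t y) - fderiv ℝ X (φ t y) (V t u))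
      (δ := 0) (K := C) (ε := c * C / (M * M) * (‖u‖ * M))
      (((hcont _ hu1).sub (hcont y hy)).continuousOn.sub (hVcont.clm_apply continuousOn_const))
      (fun t ht => by
        have h1 := ((hφ (y + u) (hρU (hrS hu1)) t).sub
          (hφ y (hρU (hrS hy)) t)).hasDerivWithinAt (s := Ici t)
        have h2 := (hV t ⟨ht.1, ht.2.le⟩).mono_of_mem_nhdsWithin (Icc_mem_nhdsGE_of_mem ht)
        have h3 := h2.clm_apply (hasDerivWithinAt_const t (Ici t) u)
        simp only [map_zero, add_zero, ContinuousLinearMap.comp_apply] at h3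
        exact h1.sub h3)
      (by simp [hφ0 y (hρU (hrS hy)), hφ0 _ (hρU (hrS hu1)), hV0])
      (fun t ht => by
        have ht' : t ∈ Icc 0 ε := ⟨ht.1, ht.2.le⟩
        have e1 := happ _ (hstay _ hu1 t ht') _ (hstay y hy t ht') ((hd t ht').trans huM)
        have e2 : ‖fderiv ℝ X (φ t y) (φ t (y + u) - φ t y - V t u)‖
            ≤ C * ‖φ t (y + u) - φ t y - V t u‖ :=
          ContinuousLinearMap.le_of_opNorm_le _ (hDC _ (hstay y hy t ht')) _
        have e3 : X (φ t (y + u)) - X (φ t y) - fderiv ℝ X (φ t y) (V t u)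
            = fderiv ℝ X (φ t y) (φ t (y + u) - φ t y - V t u)
              + (X (φ t (y + u)) - X (φ t y) - fderiv ℝ X (φ t y) (φ t (y + u) - φ t y)) := by
          rw [map_sub _ (φ t (y + u) - φ t y)]; abel
        rw [e3]
        refine (norm_add_le _ _).trans (add_le_add e2 (e1.trans ?_))
        gcongr
        exact hd t ht') s hs
  refine hg.trans ?_
  simp only [gronwallBound_of_K_ne_0 hC.ne', sub_zero, zero_mul, zero_add]
  have hexp : Real.exp (C * s) - 1 ≤ M := by
    have : Real.exp (C * s) ≤ M := by
      rw [hM]; gcongr; exact hs.2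
    linarith
  calc c * C / (M * M) * (‖u‖ * M) / C * (Real.exp (C * s) - 1)
      ≤ c * C / (M * M) * (‖u‖ * M) / C * M := by gcongr
    _ = c * ‖u‖ := by field_simp

/-- Two-sided version of `flow_differentiableAt_short_forward`, by time reversal. -/
lemma flow_differentiableAt_short [FiniteDimensional ℝ E] {U : Set E} (hU : IsOpen U)
    {X : E → E} (hX : ContDiffOn ℝ 1 X U) {φ : ℝ → E → E} (hφ0 : ∀ z ∈ U, φ 0 z = z)
    (hφ : ∀ z ∈ U, ∀ t, HasDerivAt (fun s => φ s z) (X (φ t z)) t) {z : E} (hz : z ∈ U) :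
    ∃ ε > 0, ∃ r > 0, ∀ y ∈ ball z r, ∀ s, |s| ≤ ε → DifferentiableAt ℝ (φ s) y := by
  obtain ⟨ε₁, hε₁, r₁, hr₁, h₁⟩ := flow_differentiableAt_short_forward hU hX hφ0 hφ hz
  obtain ⟨ε₂, hε₂, r₂, hr₂, h₂⟩ := flow_differentiableAt_short_forward hU (X := fun z => -X z)
    hX.neg (φ := fun t => φ (-t)) (by simpa using hφ0)
    (fun z hz t => by
      have h := (hφ z hz (-t)).scomp t (hasDerivAt_neg t)
      rw [neg_one_smul] at h
      exact h) hz
  refine ⟨min ε₁ ε₂, by positivity, min r₁ r₂, by positivity, fun y hy s hs => ?_⟩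
  rcases le_total 0 s with h | h
  · rw [abs_of_nonneg h] at hs
    exact h₁ y (ball_subset_ball (min_le_left _ _) hy) s ⟨h, hs.trans (min_le_left _ _)⟩
  · rw [abs_of_nonpos h] at hs
    simpa using h₂ y (ball_subset_ball (min_le_right _ _) hy) (-s)
      ⟨by linarith, hs.trans (min_le_right _ _)⟩

/-! ### Group law, differentiability for all times, chain rule -/

/-- Two global integral curves in `U` of a `C¹` vector field that agree at time `0` are equal. -/
lemma integralCurve_unique {U : Set E} (hU : IsOpen U) {X : E → E} (hX : ContDiffOn ℝ 1 X U)
    {f g : ℝ → E} (hf : ∀ t, HasDerivAt f (X (f t)) t) (hg : ∀ t, HasDerivAt g (X (g t)) t)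
    (hfU : ∀ t, f t ∈ U) (h0 : f 0 = g 0) : f = g := by
  have hfc : Continuous f := continuous_iff_continuousAt.2 fun t => (hf t).continuousAt
  have hgc : Continuous g := continuous_iff_continuousAt.2 fun t => (hg t).continuousAt
  have hclopen : IsClopen {t | f t = g t} := by
    refine ⟨isClosed_eq hfc hgc, isOpen_iff_mem_nhds.2 fun t (ht : f t = g t) => ?_⟩
    obtain ⟨K, s, hs, hl⟩ := (hX.contDiffAt (hU.mem_nhds (hfU t))).exists_lipschitzOnWith
    exact ODE_solution_unique_of_eventually (v := fun _ => X) (s := fun _ => s) (K := K)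
      (Eventually.of_forall fun _ => hl)
      ((hfc.continuousAt.eventually_mem hs).mono fun τ h => ⟨hf τ, h⟩)
      ((hgc.continuousAt.eventually_mem (ht ▸ hs)).mono fun τ h => ⟨hg τ, h⟩) ht
  funext t
  have : t ∈ {t | f t = g t} := (hclopen.eq_univ ⟨0, h0⟩).symm ▸ mem_univ t
  exact this

lemma flow_add {U : Set E} (hU : IsOpen U) {X : E → E} (hX : ContDiffOn ℝ 1 X U)
    {φ : ℝ → E → E} (hφU : ∀ t, ∀ z ∈ U, φ t z ∈ U) (hφ0 : ∀ z ∈ U, φ 0 z = z)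
    (hφ : ∀ z ∈ U, ∀ t, HasDerivAt (fun s => φ s z) (X (φ t z)) t) {z : E} (hz : z ∈ U)
    (t s : ℝ) : φ (t + s) z = φ t (φ s z) := by
  refine congrFun (integralCurve_unique hU hX (f := fun t => φ (t + s) z)
    (g := fun t => φ t (φ s z)) (fun t => ?_) (hφ _ (hφU s z hz)) (fun t => hφU _ z hz) ?_) t
  · exact (hφ z hz (t + s)).comp_add_const t s
  · simp [hφ0 _ (hφU s z hz)]

/-- By the group law and short-time differentiability along the orbit of `z`, the set of times `t`
at which `φ t` is differentiable at `z` is clopen in `ℝ`; it contains `0`. -/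
lemma flow_differentiableAt [FiniteDimensional ℝ E] {U : Set E} (hU : IsOpen U) {X : E → E}
    (hX : ContDiffOn ℝ 1 X U) {φ : ℝ → E → E} (hφU : ∀ t, ∀ z ∈ U, φ t z ∈ U)
    (hφ0 : ∀ z ∈ U, φ 0 z = z)
    (hφ : ∀ z ∈ U, ∀ t, HasDerivAt (fun s => φ s z) (X (φ t z)) t) {z : E} (hz : z ∈ U)
    (t : ℝ) : DifferentiableAt ℝ (φ t) z := by
  set P : Set ℝ := {t | DifferentiableAt ℝ (φ t) z} with hP
  have hloc : ∀ t₁ : ℝ, ∃ N ∈ 𝓝 t₁, ∀ t ∈ N, ∀ t' ∈ N, t ∈ P → t' ∈ P := by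
    intro t₁
    obtain ⟨ε, hε, r, hr, h⟩ := flow_differentiableAt_short hU hX hφ0 hφ (hφU t₁ z hz)
    refine ⟨ball t₁ (ε / 2) ∩ (fun t => φ t z) ⁻¹' ball (φ t₁ z) r,
      inter_mem (ball_mem_nhds _ (by positivity))
        ((hφ z hz t₁).continuousAt.preimage_mem_nhds (ball_mem_nhds _ hr)), ?_⟩
    intro t ht t' ht' htP
    have hd : DifferentiableAt ℝ (φ (t' - t)) (φ t z) := by
      refine h _ ht.2 _ ?_
      have h1 : |t - t₁| < ε / 2 := ht.1
      have h2 : |t' - t₁| < ε / 2 := ht'.1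
      rw [abs_lt] at h1 h2
      rw [abs_le]
      constructor <;> linarith
    refine (hd.comp z htP).congr_of_eventuallyEq ?_
    filter_upwards [hU.mem_nhds hz] with y hy
    rw [Function.comp_apply, ← flow_add hU hX hφU hφ0 hφ hy, sub_add_cancel]
  have hclopen : IsClopen P := by
    refine ⟨⟨isOpen_iff_mem_nhds.2 fun t₁ ht₁ => ?_⟩, isOpen_iff_mem_nhds.2 fun t₁ ht₁ => ?_⟩ <;>
      obtain ⟨N, hN, h⟩ := hloc t₁
    · exact mem_of_superset hN fun t ht htP => ht₁ (h t ht t₁ (mem_of_mem_nhds hN) htP)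
    · exact mem_of_superset hN fun t ht => h t₁ (mem_of_mem_nhds hN) t ht ht₁
  have h0 : (0 : ℝ) ∈ P := by
    refine (differentiableAt_id (𝕜 := ℝ)).congr_of_eventuallyEq ?_
    filter_upwards [hU.mem_nhds hz] with y hy
    exact hφ0 y hy
  have : t ∈ P := (hclopen.eq_univ ⟨0, h0⟩).symm ▸ mem_univ t
  exact this

/-- The cocycle property `Dφ_{t+s}(z) = Dφ_t(φ_s z) Dφ_s(z)`. -/
lemma fderiv_flow_add [FiniteDimensional ℝ E] {U : Set E} (hU : IsOpen U) {X : E → E}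
    (hX : ContDiffOn ℝ 1 X U) {φ : ℝ → E → E} (hφU : ∀ t, ∀ z ∈ U, φ t z ∈ U)
    (hφ0 : ∀ z ∈ U, φ 0 z = z)
    (hφ : ∀ z ∈ U, ∀ t, HasDerivAt (fun s => φ s z) (X (φ t z)) t) {z : E} (hz : z ∈ U)
    (t s : ℝ) (w : E) :
    fderiv ℝ (φ (t + s)) z w = fderiv ℝ (φ t) (φ s z) (fderiv ℝ (φ s) z w) := by
  have hEq : φ (t + s) =ᶠ[𝓝 z] φ t ∘ φ s := by
    filter_upwards [hU.mem_nhds hz] with y hy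
    exact flow_add hU hX hφU hφ0 hφ hy t s
  rw [hEq.fderiv_eq, fderiv_comp z (flow_differentiableAt hU hX hφU hφ0 hφ (hφU s z hz) t)
    (flow_differentiableAt hU hX hφU hφ0 hφ hz s)]
  rfl

end FlowDerivative

/-! ### Regularity of the Hamiltonian vector field -/

section VectorField

variable {ι : Type*} [Fintype ι] [DecidableEq ι]
  {F : Type*} [NormedAddCommGroup F] [NormedSpace ℝ F]

lemma contDiffOn_matrix_det {U : Set F} {M : F → Matrix ι ι ℝ}
    (hM : ∀ i j, ContDiffOn ℝ 1 (fun z => M z i j) U) :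
    ContDiffOn ℝ 1 (fun z => (M z).det) U := by
  simp only [Matrix.det_apply']
  exact ContDiffOn.sum fun σ _ => contDiffOn_const.mul (contDiffOn_prod fun i _ => hM _ _)

/-- Cramer's rule makes the entries of `M⁻¹` as regular as those of `M`. -/
lemma contDiffOn_matrix_inv {U : Set F} {M : F → Matrix ι ι ℝ}
    (hM : ∀ i j, ContDiffOn ℝ 1 (fun z => M z i j) U) (hu : ∀ z ∈ U, IsUnit (M z)) (i j : ι) :
    ContDiffOn ℝ 1 (fun z => (M z)⁻¹ i j) U := by
  have h : ∀ z, (M z)⁻¹ i j = ((M z).det)⁻¹ * ((M z).updateRow j (Pi.single i 1)).det := by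
    intro z
    rw [Matrix.inv_def, Matrix.smul_apply, Matrix.adjugate_apply, Ring.inverse_eq_inv',
      smul_eq_mul]
  simp only [h]
  refine ContDiffOn.mul (ContDiffOn.inv (contDiffOn_matrix_det hM) fun z hz => ?_)
    (contDiffOn_matrix_det fun k l => ?_)
  · exact ((Matrix.isUnit_iff_isUnit_det _).1 (hu z hz)).ne_zero
  · by_cases hk : k = j
    · subst hk
      simpa using contDiffOn_const
    · simpa [Matrix.updateRow_ne hk] using hM k l

lemma contDiffOn_hamiltonian_field {U : Set (ι → ℝ)} (hU : IsOpen U)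
    {a : (ι → ℝ) → (ι → ℝ)} (ha : ContDiffOn ℝ (⊤ : ℕ∞) a U)
    {Ω : (ι → ℝ) → Matrix ι ι ℝ} (hΩ : ∀ z, Ω z = (jacobian a z)ᵀ - jacobian a z)
    (hΩinv : ∀ z ∈ U, IsUnit (Ω z)) {H : (ι → ℝ) → ℝ} (hH : ContDiffOn ℝ (⊤ : ℕ∞) H U)
    {X : (ι → ℝ) → (ι → ℝ)} (hX : ∀ z, X z = (Ω z)⁻¹ *ᵥ drow H z) :
    ContDiffOn ℝ 1 X U := by
  have h2 : (1 : WithTop ℕ∞) + 1 ≤ ((⊤ : ℕ∞) : WithTop ℕ∞) := by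
    exact WithTop.coe_le_coe.2 (le_top : (1 + 1 : ℕ∞) ≤ ⊤)
  have hDa := ha.fderiv_of_isOpen (m := 1) hU h2
  have hDH := hH.fderiv_of_isOpen (m := 1) hU h2
  have hJ : ∀ i j, ContDiffOn ℝ 1 (fun z => jacobian a z i j) U := fun i j =>
    contDiffOn_pi.1 (hDa.clm_apply contDiffOn_const) i
  have hΩs : ∀ i j, ContDiffOn ℝ 1 (fun z => Ω z i j) U := fun i j => by
    simp only [hΩ, Matrix.sub_apply, Matrix.transpose_apply]
    exact (hJ j i).sub (hJ i j)
  rw [funext hX]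
  refine contDiffOn_pi.2 fun i => ?_
  simp only [Matrix.mulVec, dotProduct]
  exact ContDiffOn.sum fun j _ => (contDiffOn_matrix_inv hΩs hΩinv i j).mul
    (hDH.clm_apply contDiffOn_const)

end VectorField

/-- From a rank-one invariant bundle `W` of the linearized time-`T`
flow map along an invariant torus `K` (with factor `e^{Tχ}`), the formula
`Ŵ(θ, θ_d) = e^{−θ_d T χ} Dφ_{θ_d T}(K(θ − θ_d ω)) W(θ − θ_d ω)` defines a map on
`𝕋^{n−1}` satisfying `Dφ_t(K̂(θ̂)) Ŵ(θ̂) = e^{tχ} Ŵ(θ̂ + tω̂)` with `ω̂ = (1/T)(ω, 1)`. -/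
theorem flow_map_bundle_globalizes
    (n : ℕ) (U : Set (Fin (2 * n) → ℝ)) (hU : IsOpen U)
    -- the action form and the exact symplectic structure
    (a : (Fin (2 * n) → ℝ) → (Fin (2 * n) → ℝ))
    (ha : ContDiffOn ℝ (⊤ : ℕ∞) a U)
    (Ω : (Fin (2 * n) → ℝ) → Matrix (Fin (2 * n)) (Fin (2 * n)) ℝ)
    (hΩ : ∀ z, Ω z = (jacobian a z)ᵀ - jacobian a z)
    (hΩinv : ∀ z ∈ U, IsUnit (Ω z))
    -- the Hamiltonian and its vector field
    (H : (Fin (2 * n) → ℝ) → ℝ) (hH : ContDiffOn ℝ (⊤ : ℕ∞) H U)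
    (X : (Fin (2 * n) → ℝ) → (Fin (2 * n) → ℝ))
    (hX : ∀ z, X z = (Ω z)⁻¹ *ᵥ drow H z)
    -- the flow of the Hamiltonian vector field, assumed complete on U
    (φ : ℝ → (Fin (2 * n) → ℝ) → (Fin (2 * n) → ℝ))
    (hφU : ∀ (t : ℝ), ∀ z ∈ U, φ t z ∈ U)
    (hφ0 : ∀ z ∈ U, φ 0 z = z)
    (hφode : ∀ z ∈ U, ∀ t : ℝ, HasDerivAt (fun s => φ s z) (X (φ t z)) t)
    -- an invariant torus of the time-T flow map with rotation vector ω
    (ω : Fin (n - 2) → ℝ) (T : ℝ) (hT : 0 < T) (χ : ℝ)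
    (K : (Fin (n - 2) → ℝ) → (Fin (2 * n) → ℝ))
    (hK : ContDiff ℝ (⊤ : ℕ∞) K) (hKper : ZPeriodic K)
    (hKU : ∀ θ, K θ ∈ U)
    (hKinv : ∀ θ, φ T (K θ) = K (θ + ω))
    -- a rank-one invariant bundle of the linearized time-T flow map
    (W : (Fin (n - 2) → ℝ) → (Fin (2 * n) → ℝ))
    (hW : ContDiff ℝ (⊤ : ℕ∞) W) (hWper : ZPeriodic W)
    (hWinv : ∀ θ, fderiv ℝ (φ T) (K θ) (W θ) = Real.exp (T * χ) • W (θ + ω))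
    -- the globalized parameterization of the torus and of the bundle
    (Khat : (Fin (n - 2) → ℝ) → ℝ → (Fin (2 * n) → ℝ))
    (hKhat : ∀ (θ : Fin (n - 2) → ℝ) (s : ℝ), Khat θ s = φ (s * T) (K (θ - s • ω)))
    (What : (Fin (n - 2) → ℝ) → ℝ → (Fin (2 * n) → ℝ))
    (hWhat : ∀ (θ : Fin (n - 2) → ℝ) (s : ℝ),
      What θ s = Real.exp (-(s * T * χ)) •
        fderiv ℝ (φ (s * T)) (K (θ - s • ω)) (W (θ - s • ω))) :
    -- Ŵ is 1-periodic in each of its n−1 variables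
    (∀ (θ : Fin (n - 2) → ℝ) (s : ℝ) (k : Fin (n - 2) → ℤ) (q : ℤ),
        What (θ + fun i => (k i : ℝ)) (s + q) = What θ s) ∧
    -- Ŵ satisfies the linearized-flow invariance equation with ω̂ = (1/T)(ω, 1)
    (∀ (θ : Fin (n - 2) → ℝ) (s : ℝ) (t : ℝ),
        fderiv ℝ (φ t) (Khat θ s) (What θ s) =
          Real.exp (t * χ) • What (θ + (t / T) • ω) (s + t / T)) := by
  have hXs : ContDiffOn ℝ 1 X U := contDiffOn_hamiltonian_field hU ha hΩ hΩinv hH hX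
  have hD : ∀ z ∈ U, ∀ (t s : ℝ) (w : Fin (2 * n) → ℝ),
      fderiv ℝ (φ (t + s)) z w = fderiv ℝ (φ t) (φ s z) (fderiv ℝ (φ s) z w) :=
    fun z hz t s w => fderiv_flow_add hU hXs hφU hφ0 hφode hz t s w
  constructor
  · intro θ s k q
    have hk : ∀ s, What (θ + fun i => (k i : ℝ)) s = What θ s := by
      intro s
      rw [hWhat, hWhat, add_sub_right_comm, hKper, hWper]
    have hper : Function.Periodic (What θ) 1 := by
      intro s
      have e1 : θ - (s + 1) • ω = θ - s • ω - ω := by rw [add_smul, one_smul]; abel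
      have e2 : (s + 1) * T = s * T + T := by ring
      rw [hWhat, hWhat, e1, e2, hD _ (hKU _), hKinv, hWinv, sub_add_cancel, map_smul, smul_smul,
        ← Real.exp_add]
      congr 2
      ring
    rw [hk]
    simpa using hper.int_mul q s
  · intro θ s t
    have e1 : θ + (t / T) • ω - (s + t / T) • ω = θ - s • ω := by rw [add_smul]; abel
    have e2 : (s + t / T) * T = t + s * T := by field_simp; ring
    rw [hWhat, hWhat, hKhat, e1, e2, hD _ (hKU _), map_smul, smul_smul, ← Real.exp_add]
    congr 2
    ring
end
end

section
/- Let ω ∈ ℝ^ℓ be Diophantine: there exist γ > 0 and τ ≥ ℓ such that |k·ω − q| ≥ γ |k|₁^{−τ} for all k ∈ ℤ^ℓ \ {0} and q ∈ ℤ. Let η : 𝕋^ℓ → ℝ be real analytic with zero average ⟨η⟩ = 0. Then there exists a unique real analytic ξ : 𝕋^ℓ → ℝ with zero average solving the small divisors cohomological equation ξ(θ) − ξ(θ + ω) = η(θ) for all θ ∈ 𝕋^ℓ; its Fourier coefficients are ξ̂_k = η̂_k / (1 − e^{2πi k·ω}) for k ≠ 0. Moreover, all real analytic solutions of the equation differ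 from this one by an additive constant. -/
/-!
On the Fourier side the equation `ξ(θ) - ξ(θ + ω) = η(θ)` reads `ξ̂_k (1 - e^{2πi k·ω}) = η̂_k`
(`fourierCoef_cohomological`). The Diophantine condition makes every divisor with `k ≠ 0` nonzero,
which forces the formula for the coefficients; it also shows that the difference of two solutions,
being invariant under the rotation, has only a zeroth Fourier coefficient and is therefore constant
(`eq_torusAvg_of_invariant`).

For existence, the Fourier coefficients of the analytic function `η` decay exponentially in `|k|₁`
(`fourierCoef_decay`). This is obtained without complexification: translating `η` by `s • sign k`
multiplies `η̂_k` by `e^{2πi s |k|₁}`, and comparing Taylor coefficients in `s` with the uniform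
Cauchy estimates of `η` on the compact unit cube (`exists_cauchy_bound`) bounds `η̂_k`. The small
divisors satisfy `|1 - e^{2πi k·ω}| ≥ 4γ|k|₁^{-τ}` (`small_divisor_bound`), a polynomial loss that
only halves the decay rate. A trigonometric series with exponentially decaying coefficients is real
analytic, by summing the power series of its terms (`analyticAt_fourierSeries`). The real part of
the resulting series, minus its average, is the solution `ξ`; that the series solves the equation
is Fourier inversion for `η` (`hasSum_fourier`).
-/

open MeasureTheory Complex

noncomputable section

/-- The average `⟨f⟩ = ∫_{𝕋^ℓ} f(θ) dθ` of a function on the torus. -/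
def torusAvg {ℓ : ℕ} (f : (Fin ℓ → ℝ) → ℝ) : ℝ :=
  ∫ θ in Set.Icc (0 : Fin ℓ → ℝ) 1, f θ

/-- The `k`-th Fourier coefficient `f̂_k = ∫_{𝕋^ℓ} f(θ) e^{−2πi k·θ} dθ`. -/
def fourierCoef {ℓ : ℕ} (f : (Fin ℓ → ℝ) → ℝ) (k : Fin ℓ → ℤ) : ℂ :=
  ∫ θ in Set.Icc (0 : Fin ℓ → ℝ) 1,
    (f θ : ℂ) * Complex.exp (-(2 * Real.pi * Complex.I * ∑ i, (k i : ℂ) * (θ i : ℂ)))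

/-! ### Fourier series of periodic functions -/

/-- The character `θ ↦ e^{2πi k·θ}`. -/
def torusChar {ℓ : ℕ} (k : Fin ℓ → ℤ) (θ : Fin ℓ → ℝ) : ℂ :=
  Complex.exp (2 * Real.pi * Complex.I * ∑ i, (k i : ℂ) * (θ i : ℂ))

/-- The quotient map `ℝ^ℓ → 𝕋^ℓ`. -/
def toTorus {ℓ : ℕ} (x : Fin ℓ → ℝ) : UnitAddTorus (Fin ℓ) := fun i => (x i : UnitAddCircle)

lemma torusChar_add {ℓ : ℕ} (k : Fin ℓ → ℤ) (x y : Fin ℓ → ℝ) :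
    torusChar k (x + y) = torusChar k x * torusChar k y := by
  simp only [torusChar, ← Complex.exp_add]
  congr 1
  simp [mul_add, Finset.sum_add_distrib]

lemma torusChar_neg {ℓ : ℕ} (k : Fin ℓ → ℤ) (x : Fin ℓ → ℝ) :
    torusChar (-k) x = Complex.exp (-(2 * Real.pi * Complex.I * ∑ i, (k i : ℂ) * (x i : ℂ))) := by
  simp only [torusChar]
  congr 1
  simp

lemma torusChar_neg_mul {ℓ : ℕ} (k : Fin ℓ → ℤ) (x : Fin ℓ → ℝ) :
    torusChar (-k) x * torusChar k x = 1 := by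
  rw [torusChar_neg, torusChar, ← Complex.exp_add]
  simp

lemma torusChar_zero {ℓ : ℕ} (x : Fin ℓ → ℝ) : torusChar 0 x = 1 := by
  simp [torusChar]

lemma torusChar_eq_exp_ofReal {ℓ : ℕ} (k : Fin ℓ → ℤ) (θ : Fin ℓ → ℝ) :
    torusChar k θ = Complex.exp (Complex.I * ((2 * Real.pi * ∑ i, (k i : ℝ) * θ i : ℝ) : ℂ)) := by
  rw [torusChar]
  congr 1
  push_cast
  ring

lemma norm_torusChar {ℓ : ℕ} (k : Fin ℓ → ℤ) (θ : Fin ℓ → ℝ) : ‖torusChar k θ‖ = 1 := by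
  rw [torusChar_eq_exp_ofReal, mul_comm, Complex.norm_exp_ofReal_mul_I]

lemma continuous_torusChar {ℓ : ℕ} (k : Fin ℓ → ℤ) : Continuous (torusChar k) := by
  unfold torusChar
  fun_prop

lemma mFourier_toTorus {ℓ : ℕ} (k : Fin ℓ → ℤ) (x : Fin ℓ → ℝ) :
    UnitAddTorus.mFourier k (toTorus x) = torusChar k x := by
  simp only [UnitAddTorus.mFourier, ContinuousMap.coe_mk, toTorus, fourier_coe_apply, torusChar,
    ← Complex.exp_sum, Finset.mul_sum]
  congr 1
  refine Finset.sum_congr rfl fun i _ => ?_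
  simp
  ring

lemma exists_int_of_toTorus_eq {ℓ : ℕ} {x y : Fin ℓ → ℝ} (h : toTorus x = toTorus y) :
    ∃ k : Fin ℓ → ℤ, x = y + fun i => (k i : ℝ) := by
  have h' : ∀ i, ∃ n : ℤ, x i = y i + n := by
    intro i
    have h1 : ((x i : ℝ) : UnitAddCircle) = (y i : ℝ) := congrFun h i
    have h2 : ((x i - y i : ℝ) : UnitAddCircle) = 0 := by
      rw [AddCircle.coe_sub, h1, sub_self]
    obtain ⟨n, hn⟩ := (AddCircle.coe_eq_zero_iff (1 : ℝ)).1 h2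
    refine ⟨n, ?_⟩
    simp at hn
    linarith
  choose k hk using h'
  exact ⟨k, funext hk⟩

lemma isOpenQuotientMap_toTorus {ℓ : ℕ} :
    IsOpenQuotientMap (toTorus : (Fin ℓ → ℝ) → UnitAddTorus (Fin ℓ)) :=
  IsOpenQuotientMap.piMap fun _ => QuotientAddGroup.isOpenQuotientMap_mk

lemma ZPeriodic.exists_lift {ℓ : ℕ} {α : Type*} {f : (Fin ℓ → ℝ) → α} (hf : ZPeriodic f) :
    ∃ F : UnitAddTorus (Fin ℓ) → α, ∀ x, F (toTorus x) = f x := by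
  have hs := (isOpenQuotientMap_toTorus (ℓ := ℓ)).surjective
  refine ⟨fun t => f (Function.surjInv hs t), fun x => ?_⟩
  obtain ⟨k, hk⟩ := exists_int_of_toTorus_eq (Function.surjInv_eq hs (toTorus x))
  simp only [hk]
  exact hf x k

lemma zPeriodic_torusChar {ℓ : ℕ} (k : Fin ℓ → ℤ) : ZPeriodic (torusChar k) := by
  intro x n
  rw [← mFourier_toTorus, ← mFourier_toTorus]
  congr 1
  funext i
  simp [toTorus]

/-- The half-open unit box with lower corner `a`. -/
def unitBox {ℓ : ℕ} (a : Fin ℓ → ℝ) : Set (Fin ℓ → ℝ) := {x | ∀ i, x i ∈ Set.Ioc (a i) (a i + 1)}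

lemma setIntegral_Icc_eq_unitBox {ℓ : ℕ} (g : (Fin ℓ → ℝ) → ℂ) :
    ∫ θ in Set.Icc (0 : Fin ℓ → ℝ) 1, g θ = ∫ θ in unitBox 0, g θ := by
  refine (setIntegral_congr_set ?_).symm
  have h := Measure.univ_pi_Ioc_ae_eq_Icc (μ := fun _ : Fin ℓ => (volume : Measure ℝ))
    (f := 0) (g := 1)
  have hbox : (unitBox 0 : Set (Fin ℓ → ℝ)) =
      Set.univ.pi fun i => Set.Ioc ((0 : Fin ℓ → ℝ) i) ((1 : Fin ℓ → ℝ) i) := by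
    ext x
    simp [unitBox, Set.mem_pi]
  rw [hbox]
  exact h

/-- Translation invariance of the integral of a periodic function over a fundamental domain: both
the original and the translated box compute the same integral over the torus. -/
lemma ZPeriodic.setIntegral_add {ℓ : ℕ} {g : (Fin ℓ → ℝ) → ℂ} (hg : ZPeriodic g)
    (v : Fin ℓ → ℝ) :
    ∫ θ in Set.Icc (0 : Fin ℓ → ℝ) 1, g (θ + v) = ∫ θ in Set.Icc (0 : Fin ℓ → ℝ) 1, g θ := by
  obtain ⟨G, hG⟩ := hg.exists_lift
  have hbox : ∀ a : Fin ℓ → ℝ, ∫ θ in unitBox a, g θ = ∫ θ in unitBox 0, g θ := by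
    intro a
    have := (UnitAddTorus.integral_preimage G a).symm.trans (UnitAddTorus.integral_preimage G 0)
    simpa only [← hG] using! this
  rw [setIntegral_Icc_eq_unitBox, setIntegral_Icc_eq_unitBox, ← hbox v]
  have hpre : (fun x => x + v) ⁻¹' unitBox v = unitBox 0 := by
    ext x
    simp only [unitBox, Set.mem_preimage, Set.mem_ofPred_eq, Set.mem_Ioc, Pi.add_apply,
      Pi.zero_apply]
    refine forall_congr' fun i => and_congr ?_ ?_ <;> constructor <;> intro h <;> linarith
  rw [← hpre]
  exact (measurePreserving_add_right volume v).setIntegral_preimage_emb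
    (measurableEmbedding_addRight v) g (unitBox v)

lemma fourierCoef_eq {ℓ : ℕ} (f : (Fin ℓ → ℝ) → ℝ) (k : Fin ℓ → ℤ) :
    fourierCoef f k = ∫ θ in Set.Icc (0 : Fin ℓ → ℝ) 1, (f θ : ℂ) * torusChar (-k) θ := by
  simp only [fourierCoef, torusChar_neg]

lemma fourierCoef_shift {ℓ : ℕ} {f : (Fin ℓ → ℝ) → ℝ} (hf : ZPeriodic f) (k : Fin ℓ → ℤ)
    (v : Fin ℓ → ℝ) :
    ∫ θ in Set.Icc (0 : Fin ℓ → ℝ) 1, (f (θ + v) : ℂ) * torusChar (-k) θ =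
      torusChar k v * fourierCoef f k := by
  have hper : ZPeriodic fun θ => (f θ : ℂ) * torusChar (-k) θ := by
    intro θ n
    simp only [hf θ n, zPeriodic_torusChar (-k) θ n]
  rw [fourierCoef_eq, ← hper.setIntegral_add v, ← integral_const_mul]
  congr 1
  funext θ
  rw [torusChar_add]
  linear_combination (-(f (θ + v) : ℂ) * torusChar (-k) θ) * torusChar_neg_mul k v

lemma fourierCoef_zero {ℓ : ℕ} (f : (Fin ℓ → ℝ) → ℝ) : fourierCoef f 0 = torusAvg f := by
  rw [fourierCoef_eq, torusAvg, ← integral_complex_ofReal]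
  simp [torusChar_zero]

lemma integrableOn_Icc_of_continuous {ℓ : ℕ} {E : Type*} [NormedAddCommGroup E]
    {f : (Fin ℓ → ℝ) → E} (hf : Continuous f) :
    IntegrableOn f (Set.Icc (0 : Fin ℓ → ℝ) 1) :=
  hf.continuousOn.integrableOn_compact isCompact_Icc

/-- Fourier inversion for continuous periodic functions with summable Fourier coefficients. -/
lemma hasSum_fourier {ℓ : ℕ} {f : (Fin ℓ → ℝ) → ℝ} (hf : ZPeriodic f) (hc : Continuous f)
    (hs : Summable (fourierCoef f)) (θ : Fin ℓ → ℝ) :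
    HasSum (fun k => fourierCoef f k * torusChar k θ) (f θ : ℂ) := by
  obtain ⟨F₀, hF₀⟩ := hf.exists_lift
  have hF₀c : Continuous F₀ := by
    rw [← isOpenQuotientMap_toTorus.continuous_comp_iff]
    convert hc
    exact funext hF₀
  let F : C(UnitAddTorus (Fin ℓ), ℂ) := ⟨fun t => (F₀ t : ℂ), by fun_prop⟩
  have hF : ∀ x, F (toTorus x) = (f x : ℂ) := fun x => by simp [F, hF₀]
  have hcoef : UnitAddTorus.mFourierCoeff F = fourierCoef f := by
    funext k
    rw [fourierCoef_eq, setIntegral_Icc_eq_unitBox, UnitAddTorus.mFourierCoeff_eq_integral F k 0]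
    change ∫ x in unitBox 0, UnitAddTorus.mFourier (-k) (toTorus x) • F (toTorus x) = _
    simp only [mFourier_toTorus, hF, smul_eq_mul, mul_comm]
  have h := UnitAddTorus.hasSum_mFourier_series_apply_of_summable (f := F) (hcoef ▸ hs) (toTorus θ)
  simpa only [hcoef, hF, mFourier_toTorus, smul_eq_mul] using h

/-! ### Decay of the Fourier coefficients -/

/-- Cauchy estimates for a real analytic function, uniform near a point: the Taylor series at every
nearby point converges on balls of a fixed radius `r`, with coefficients bounded by `C / r^n`. -/
lemma exists_local_cauchy_bound {ℓ : ℕ} {f : (Fin ℓ → ℝ) → ℝ} {x : Fin ℓ → ℝ}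
    (hf : AnalyticAt ℝ f x) :
    ∃ C r : ℝ, 0 < r ∧ ∀ θ ∈ Metric.ball x r, ∀ v : Fin ℓ → ℝ, ‖v‖ ≤ 1 →
      (∀ n : ℕ, |(n.factorial : ℝ)⁻¹ * iteratedFDeriv ℝ n f θ (fun _ => v)| * r ^ n ≤ C) ∧
      ∀ s : ℝ, |s| < r →
        HasSum (fun n : ℕ => s ^ n * ((n.factorial : ℝ)⁻¹ * iteratedFDeriv ℝ n f θ (fun _ => v)))
          (f (θ + s • v)) := by
  obtain ⟨p, R, hp⟩ := hf
  obtain ⟨ρ, hρ0, hρR⟩ := ENNReal.lt_iff_exists_nnreal_btwn.1 hp.r_pos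
  have hρ0 : 0 < ρ := by exact_mod_cast hρ0
  set r : NNReal := ρ / 2 with hr
  have hrr : r + r = ρ := add_halves ρ
  have hr0 : 0 < r := by positivity
  have hsum := p.changeOriginSeries_summable_aux₁ (r := r) (r' := r)
    (by rw [← ENNReal.coe_add, hrr]; exact hρR.trans_le hp.r_le)
  set M := ∑' s : Σ k l : ℕ, { s : Finset (Fin (k + l)) // s.card = l },
      ‖p (s.1 + s.2.1)‖₊ * r ^ s.2.1 * r ^ s.1 with hM
  refine ⟨M, r, by exact_mod_cast hr0, fun θ hθ v hv => ?_⟩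
  obtain ⟨y, rfl⟩ : ∃ y, θ = x + y := ⟨θ - x, by abel⟩
  have hy : ‖y‖₊ < r := by
    rw [← NNReal.coe_lt_coe]
    simpa [dist_eq_norm] using hθ
  have hyR : (‖y‖₊ : ENNReal) < R :=
    lt_trans (by exact_mod_cast hy.trans_le (by rw [← hrr]; exact le_self_add)) hρR
  have hq := hp.changeOrigin hyR
  have hrq : (r : ENNReal) ≤ R - ‖y‖₊ := by
    refine ENNReal.le_sub_of_add_le_right ENNReal.coe_ne_top (le_trans ?_ hρR.le)
    rw [← hrr, ← ENNReal.coe_add, ENNReal.coe_le_coe]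
    gcongr
  have hbd : ∀ n, ‖p.changeOrigin y n‖₊ * r ^ n ≤ M := by
    intro n
    have hn := (NNReal.summable_sigma.1 hsum).1 n
    have h0 : ∀ s : Σ l : ℕ, { s : Finset (Fin (n + l)) // s.card = l },
        ‖p (n + s.1)‖₊ * ‖y‖₊ ^ s.1 * r ^ n ≤ ‖p (n + s.1)‖₊ * r ^ s.1 * r ^ n := by
      intro s
      gcongr
    calc ‖p.changeOrigin y n‖₊ * r ^ n
        ≤ (∑' s : Σ l : ℕ, { s : Finset (Fin (n + l)) // s.card = l },
            ‖p (n + s.1)‖₊ * ‖y‖₊ ^ s.1) * r ^ n := by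
          gcongr
          exact p.nnnorm_changeOrigin_le n (hyR.trans_le hp.r_le)
      _ = ∑' s : Σ l : ℕ, { s : Finset (Fin (n + l)) // s.card = l },
            ‖p (n + s.1)‖₊ * ‖y‖₊ ^ s.1 * r ^ n := by rw [NNReal.tsum_mul_right]
      _ ≤ ∑' s : Σ l : ℕ, { s : Finset (Fin (n + l)) // s.card = l },
            ‖p (n + s.1)‖₊ * r ^ s.1 * r ^ n :=
          (NNReal.summable_of_le h0 hn).tsum_le_tsum h0 hn
      _ ≤ M := NNReal.tsum_comp_le_tsum_of_inj hsum (i := Sigma.mk n)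
          sigma_mk_injective
  constructor
  · intro n
    have h1 : (n.factorial : ℝ)⁻¹ * iteratedFDeriv ℝ n f (x + y) (fun _ => v)
        = p.changeOrigin y n (fun _ => v) := by
      rw [← hq.factorial_smul v n, nsmul_eq_mul, ← mul_assoc, inv_mul_cancel₀, one_mul]
      exact_mod_cast n.factorial_ne_zero
    rw [h1]
    have h2 : |p.changeOrigin y n (fun _ => v)| ≤ ‖p.changeOrigin y n‖ := by
      refine ((p.changeOrigin y n).le_opNorm _).trans ?_
      simp only [Finset.prod_const]
      exact mul_le_of_le_one_right (norm_nonneg _) (pow_le_one₀ (norm_nonneg _) hv)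
    exact (mul_le_mul_of_nonneg_right h2 (by positivity)).trans (by exact_mod_cast hbd n)
  · intro s hs
    have hmem : s • v ∈ Metric.eball (0 : Fin ℓ → ℝ) (R - ‖y‖₊) := by
      refine Metric.eball_subset_eball hrq ?_
      rw [Metric.eball_coe, mem_ball_zero_iff, norm_smul]
      exact (mul_le_of_le_one_right (norm_nonneg _) hv).trans_lt hs
    convert! hq.hasSum_iteratedFDeriv hmem using 2 with n
    have := (iteratedFDeriv ℝ n f (x + y)).map_smul_univ (fun _ => s) (fun _ => v)
    simp only [Finset.prod_const, Finset.card_univ, Fintype.card_fin, smul_eq_mul] at this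
    rw [this, smul_eq_mul]
    ring

lemma exists_cauchy_bound {ℓ : ℕ} {f : (Fin ℓ → ℝ) → ℝ} (hf : ∀ x, AnalyticAt ℝ f x)
    {K : Set (Fin ℓ → ℝ)} (hK : IsCompact K) :
    ∃ C r : ℝ, 0 < r ∧ ∀ θ ∈ K, ∀ v : Fin ℓ → ℝ, ‖v‖ ≤ 1 →
      (∀ n : ℕ, |(n.factorial : ℝ)⁻¹ * iteratedFDeriv ℝ n f θ (fun _ => v)| * r ^ n ≤ C) ∧
      ∀ s : ℝ, |s| < r →
        HasSum (fun n : ℕ => s ^ n * ((n.factorial : ℝ)⁻¹ * iteratedFDeriv ℝ n f θ (fun _ => v)))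
          (f (θ + s • v)) := by
  refine hK.induction_on (p := fun K => ∃ C r : ℝ, 0 < r ∧ ∀ θ ∈ K, ∀ v : Fin ℓ → ℝ, ‖v‖ ≤ 1 →
      (∀ n : ℕ, |(n.factorial : ℝ)⁻¹ * iteratedFDeriv ℝ n f θ (fun _ => v)| * r ^ n ≤ C) ∧
      ∀ s : ℝ, |s| < r →
        HasSum (fun n : ℕ => s ^ n * ((n.factorial : ℝ)⁻¹ * iteratedFDeriv ℝ n f θ (fun _ => v)))
          (f (θ + s • v))) ?_ ?_ ?_ ?_
  · exact ⟨0, 1, one_pos, by simp⟩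
  · rintro S T hST ⟨C, r, hr, h⟩
    exact ⟨C, r, hr, fun θ hθ => h θ (hST hθ)⟩
  · rintro S T ⟨C, r, hr, h⟩ ⟨C', r', hr', h'⟩
    refine ⟨max C C', min r r', lt_min hr hr', ?_⟩
    have hm : 0 ≤ min r r' := (lt_min hr hr').le
    rintro θ (hθ | hθ) v hv
    · refine ⟨fun n => ?_, fun s hs => (h θ hθ v hv).2 s (hs.trans_le (min_le_left _ _))⟩
      refine le_trans ?_ (((h θ hθ v hv).1 n).trans (le_max_left _ _))
      gcongr
      exact min_le_left _ _
    · refine ⟨fun n => ?_, fun s hs => (h' θ hθ v hv).2 s (hs.trans_le (min_le_right _ _))⟩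
      refine le_trans ?_ (((h' θ hθ v hv).1 n).trans (le_max_right _ _))
      gcongr
      exact min_le_right _ _
  · intro x _
    obtain ⟨C, r, hr, h⟩ := exists_local_cauchy_bound (hf x)
    exact ⟨_, mem_nhdsWithin_of_mem_nhds (Metric.ball_mem_nhds x hr), C, r, hr, h⟩

/-- Two power series in a real variable with the same sum near `0` have the same coefficients. -/
lemma coeff_eq_of_hasSum {a b : ℕ → ℂ} {g : ℝ → ℂ} {r : ℝ} (hr : 0 < r)
    (ha : ∀ s : ℝ, |s| < r → HasSum (fun n => (s : ℂ) ^ n * a n) (g s))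
    (hb : ∀ s : ℝ, |s| < r → HasSum (fun n => (s : ℂ) ^ n * b n) (g s)) (n : ℕ) : a n = b n := by
  have key : ∀ c : ℕ → ℂ, (∀ s : ℝ, |s| < r → HasSum (fun n => (s : ℂ) ^ n * c n) (g s)) →
      HasFPowerSeriesAt g
        (fun n => ContinuousMultilinearMap.mkPiRing ℝ (Fin n) (c n) :
          FormalMultilinearSeries ℝ ℝ ℂ) 0 := by
    intro c hc
    refine hasFPowerSeriesAt_iff.2 ?_
    filter_upwards [Metric.ball_mem_nhds (0 : ℝ) hr] with s hs
    have := hc s (by simpa using hs)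
    simpa [FormalMultilinearSeries.coeff] using this
  have h := (key a ha).eq_formalMultilinearSeries (key b hb)
  have := congrArg (fun p => FormalMultilinearSeries.coeff p n) h
  simpa [FormalMultilinearSeries.coeff] using this

/-- Exponential decay of the Fourier coefficients of a real analytic function. Translating `f` by
`s • v` multiplies the `k`-th coefficient by `e^{2πi s k·v}`; for `v = sign k` the exponent is
`2πi s |k|₁`. Comparing Taylor coefficients in `s` and using the Cauchy estimates bounds
`‖f̂_k‖ (2π|k|₁)^n / n!` by `C / r^n`, and summing over `n` against `(r/2)^n` gives the claim. -/
lemma fourierCoef_decay {ℓ : ℕ} {f : (Fin ℓ → ℝ) → ℝ} (hper : ZPeriodic f)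
    (hf : ∀ x, AnalyticAt ℝ f x) :
    ∃ C δ : ℝ, 0 < δ ∧ ∀ k : Fin ℓ → ℤ,
      ‖fourierCoef f k‖ ≤ C * Real.exp (-δ * ((∑ i, |k i| : ℤ) : ℝ)) := by
  obtain ⟨C, r, hr, hC⟩ := exists_cauchy_bound hf (isCompact_Icc (a := (0 : Fin ℓ → ℝ)) (b := 1))
  have hsmooth : ContDiff ℝ ⊤ f := contDiff_iff_contDiffAt.2 fun x => (hf x).contDiffAt
  refine ⟨2 * C, Real.pi * r, by positivity, fun k => ?_⟩
  set K : ℝ := ((∑ i, |k i| : ℤ) : ℝ) with hK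
  have hK0 : 0 ≤ K := by
    rw [hK]
    exact_mod_cast Finset.sum_nonneg fun i _ => abs_nonneg (k i)
  set v : Fin ℓ → ℝ := fun i => ((k i).sign : ℝ) with hv
  have hv1 : ‖v‖ ≤ 1 := by
    refine (pi_norm_le_iff_of_nonneg zero_le_one).2 fun i => ?_
    rcases lt_trichotomy (k i) 0 with h | h | h
    · simp [hv, Int.sign_eq_neg_one_of_neg h]
    · simp [hv, h]
    · simp [hv, Int.sign_eq_one_of_pos h]
  have hchar : ∀ s : ℝ, torusChar k (s • v) =
      Complex.exp ((s : ℂ) * (2 * Real.pi * Complex.I * K)) := by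
    intro s
    have h1 : ∑ i, (k i : ℂ) * ((s • v) i : ℂ) = s * (K : ℂ) := by
      rw [hK]
      push_cast
      rw [Finset.mul_sum]
      refine Finset.sum_congr rfl fun i _ => ?_
      have h2 : ((|(k i : ℝ)| : ℝ) : ℂ) = (k i : ℂ) * ((k i).sign : ℂ) := by
        rw [← Int.cast_abs, Complex.ofReal_intCast, ← Int.sign_mul_self_eq_abs]
        push_cast
        ring
      simp only [hv, Pi.smul_apply, smul_eq_mul]
      push_cast
      rw [h2]
      ring
    rw [torusChar, h1]
    congr 1
    ring
  set c : ℕ → (Fin ℓ → ℝ) → ℝ := fun n θ =>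
    (n.factorial : ℝ)⁻¹ * iteratedFDeriv ℝ n f θ (fun _ => v) with hc
  have hcc : ∀ n, Continuous (c n) := by
    intro n
    have h1 : Continuous (iteratedFDeriv ℝ n f) :=
      hsmooth.continuous_iteratedFDeriv (m := n) (by exact_mod_cast le_top)
    have h2 : Continuous fun θ => iteratedFDeriv ℝ n f θ (fun _ => v) :=
      (ContinuousMultilinearMap.apply ℝ (fun _ : Fin n => Fin ℓ → ℝ) ℝ
        (fun _ => v)).continuous.comp h1
    exact continuous_const.mul h2
  have hcb : ∀ n, ∀ θ ∈ Set.Icc (0 : Fin ℓ → ℝ) 1, |c n θ| ≤ C / r ^ n := by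
    intro n θ hθ
    rw [le_div_iff₀ (by positivity)]
    exact (hC θ hθ v hv1).1 n
  set a : ℕ → ℂ := fun n =>
    ∫ θ in Set.Icc (0 : Fin ℓ → ℝ) 1, (c n θ : ℂ) * torusChar (-k) θ with ha
  have hvol : volume.real (Set.Icc (0 : Fin ℓ → ℝ) 1) = 1 := by
    simp [measureReal_def, Real.volume_Icc_pi]
  have hab : ∀ n, ‖a n‖ ≤ C / r ^ n := by
    intro n
    have := norm_setIntegral_le_of_norm_le_const (μ := volume)
      (s := Set.Icc (0 : Fin ℓ → ℝ) 1) (f := fun θ => (c n θ : ℂ) * torusChar (-k) θ)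
      (C := C / r ^ n) isCompact_Icc.measure_lt_top (fun θ hθ => by
        rw [norm_mul, norm_torusChar, mul_one, Complex.norm_real]
        exact hcb n θ hθ)
    rwa [hvol, mul_one] at this
  have hC0 : 0 ≤ C := by simpa using (norm_nonneg _).trans (hab 0)
  have hA : ∀ s : ℝ, |s| < r / 2 → HasSum (fun n => (s : ℂ) ^ n * a n)
      (torusChar k (s • v) * fourierCoef f k) := by
    intro s hs
    rw [← fourierCoef_shift hper]
    have hgeo : Summable fun n : ℕ => C * (1 / 2 : ℝ) ^ n := summable_geometric_two.mul_left C
    have h := hasSum_integral_of_dominated_convergence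
      (μ := volume.restrict (Set.Icc (0 : Fin ℓ → ℝ) 1))
      (F := fun n θ => (s : ℂ) ^ n * ((c n θ : ℂ) * torusChar (-k) θ))
      (f := fun θ => (f (θ + s • v) : ℂ) * torusChar (-k) θ)
      (fun n _ => C * (1 / 2 : ℝ) ^ n) ?_ ?_ ?_ ?_ ?_
    · simpa only [integral_const_mul] using h
    · intro n
      refine Continuous.aestronglyMeasurable ?_
      have := hcc n
      have := continuous_torusChar (-k)
      fun_prop
    · intro n
      refine (ae_restrict_iff' measurableSet_Icc).2 (Filter.Eventually.of_forall fun θ hθ => ?_)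
      rw [norm_mul, norm_mul, norm_torusChar, mul_one, Complex.norm_real, norm_pow,
        Complex.norm_real]
      calc ‖s‖ ^ n * ‖c n θ‖ ≤ (r / 2) ^ n * (C / r ^ n) := by
            gcongr
            · exact hs.le
            · exact hcb n θ hθ
        _ = C * (1 / 2 : ℝ) ^ n := by
          rw [div_pow, div_pow, one_pow]
          field_simp
    · exact Filter.Eventually.of_forall fun _ => hgeo
    · exact integrableOn_const (isCompact_Icc.measure_lt_top.ne)
    · refine (ae_restrict_iff' measurableSet_Icc).2 (Filter.Eventually.of_forall fun θ hθ => ?_)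
      have h1 := (hC θ hθ v hv1).2 s (by linarith)
      have h2 := (Complex.hasSum_ofReal.2 h1).mul_right (torusChar (-k) θ)
      convert! h2 using 2 with n
      simp only [hc]
      push_cast
      ring
  have hB : ∀ s : ℝ, |s| < r / 2 → HasSum
      (fun n : ℕ => (s : ℂ) ^ n * ((2 * Real.pi * Complex.I * K) ^ n / (n.factorial : ℂ) *
        fourierCoef f k)) (torusChar k (s • v) * fourierCoef f k) := by
    intro s _
    rw [hchar]
    have h := (NormedSpace.expSeries_div_hasSum_exp ((s : ℂ) * (2 * Real.pi * Complex.I * K)))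
    rw [← Complex.exp_eq_exp_ℂ] at h
    convert! h.mul_right (fourierCoef f k) using 2 with n
    rw [mul_pow]
    ring
  have hcoef := coeff_eq_of_hasSum (half_pos hr) hA hB
  have hterm : ∀ n : ℕ, (Real.pi * r * K) ^ n / (n.factorial : ℝ) * ‖fourierCoef f k‖ ≤
      C * (1 / 2 : ℝ) ^ n := by
    intro n
    have h := hab n
    rw [hcoef n, norm_mul, norm_div, norm_pow] at h
    have hn : ‖(2 * Real.pi * Complex.I * K : ℂ)‖ = 2 * Real.pi * K := by
      simp [abs_of_nonneg hK0, abs_of_pos Real.pi_pos]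
    rw [hn, Complex.norm_natCast] at h
    calc (Real.pi * r * K) ^ n / (n.factorial : ℝ) * ‖fourierCoef f k‖
        = (r / 2) ^ n * ((2 * Real.pi * K) ^ n / (n.factorial : ℝ) * ‖fourierCoef f k‖) := by
          rw [show Real.pi * r * K = (r / 2) * (2 * Real.pi * K) by ring, mul_pow]
          ring
      _ ≤ (r / 2) ^ n * (C / r ^ n) := by gcongr
      _ = C * (1 / 2 : ℝ) ^ n := by
          rw [div_pow, div_pow, one_pow]
          field_simp
  have hexp := (NormedSpace.expSeries_div_hasSum_exp (Real.pi * r * K)).mul_right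
    ‖fourierCoef f k‖
  rw [← Real.exp_eq_exp_ℝ] at hexp
  have hfin := hasSum_le hterm hexp (hasSum_geometric_two.mul_left C)
  rw [show -(Real.pi * r) * K = -(Real.pi * r * K) by ring, Real.exp_neg, ← div_eq_mul_inv,
    le_div_iff₀ (Real.exp_pos _)]
  linarith

/-! ### Analyticity of trigonometric series -/

/-- A sum of power series on a common ball is analytic at the centre, provided the double family of
its terms is absolutely summable in the norm. -/
lemma analyticAt_tsum_of_summable {ι E F : Type*} [NormedAddCommGroup E] [NormedSpace ℝ E]
    [NormedAddCommGroup F] [NormedSpace ℝ F] [CompleteSpace F] {f : ι → E → F}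
    {P : ι → FormalMultilinearSeries ℝ E F} {x : E} {r : NNReal} (hr : 0 < r)
    (hf : ∀ i y, HasSum (fun n => P i n (fun _ => y)) (f i (x + y)))
    (hs : Summable fun q : ι × ℕ => ‖P q.1 q.2‖ * (r : ℝ) ^ q.2) :
    AnalyticAt ℝ (fun z => ∑' i, f i z) x := by
  have hswap : Summable fun q : ℕ × ι => ‖P q.2 q.1‖ * (r : ℝ) ^ q.1 := hs.prod_symm
  have hfib : ∀ n, Summable fun i => ‖P i n‖ * (r : ℝ) ^ n := fun n => hswap.prod_factor n
  have hfib' : ∀ n, Summable fun i => P i n := by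
    intro n
    refine Summable.of_norm ?_
    have hrn : (r : ℝ) ^ n ≠ 0 := pow_ne_zero _ (by exact_mod_cast hr.ne')
    exact (summable_mul_right_iff hrn).1 (hfib n)
  let Q : FormalMultilinearSeries ℝ E F := fun n => ∑' i, P i n
  refine ⟨Q, r, ?_, by exact_mod_cast hr, ?_⟩
  · refine Q.le_radius_of_bound (∑' n, ∑' i, ‖P i n‖ * (r : ℝ) ^ n) fun n => ?_
    have h1 : ‖Q n‖ * (r : ℝ) ^ n ≤ ∑' i, ‖P i n‖ * (r : ℝ) ^ n := by
      rw [tsum_mul_right]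
      gcongr
      refine norm_tsum_le_tsum_norm ?_
      have hrn : (r : ℝ) ^ n ≠ 0 := pow_ne_zero _ (by exact_mod_cast hr.ne')
      exact (summable_mul_right_iff hrn).1 (hfib n)
    refine h1.trans (hswap.prod.le_tsum n fun m _ => ?_)
    exact tsum_nonneg fun i => by positivity
  · intro y hy
    have hy' : ‖y‖ ≤ r := by
      rw [Metric.eball_coe, mem_ball_zero_iff] at hy
      exact hy.le
    have hsum : Summable fun q : ι × ℕ => P q.1 q.2 (fun _ => y) := by
      refine Summable.of_norm_bounded hs fun q => ?_
      refine ((P q.1 q.2).le_opNorm _).trans ?_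
      simp only [Finset.prod_const, Finset.card_univ, Fintype.card_fin]
      gcongr
    have h1 := hsum.hasSum.prod_fiberwise fun i => hf i y
    have h2 : HasSum (fun q : ℕ × ι => P q.2 q.1 (fun _ => y))
        (∑' q : ι × ℕ, P q.1 q.2 (fun _ => y)) :=
      (Equiv.prodComm ℕ ι).hasSum_iff.2 hsum.hasSum
    rw [h1.tsum_eq]
    refine h2.prod_fiberwise fun n => ?_
    exact (hfib' n).hasSum.mapL
      (ContinuousMultilinearMap.apply ℝ (fun _ : Fin n => E) F (fun _ => y))

lemma summable_exp_neg_l1 (ℓ : ℕ) {δ : ℝ} (hδ : 0 < δ) :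
    Summable fun k : Fin ℓ → ℤ => Real.exp (-δ * ((∑ i, |k i| : ℤ) : ℝ)) := by
  have h1 : Summable fun n : ℤ => Real.exp (-δ * ((|n| : ℤ) : ℝ)) := by
    have h0 : Summable fun n : ℕ => Real.exp (-δ * n) := by
      have := Real.summable_exp_nat_mul_iff.2 (neg_lt_zero.2 hδ)
      simpa only [mul_comm] using this
    refine Summable.of_nat_of_neg ?_ ?_ <;> simpa using h0
  have h2 : ∀ k : Fin ℓ → ℤ, Real.exp (-δ * ((∑ i, |k i| : ℤ) : ℝ)) =
      ∏ i, Real.exp (-δ * ((|k i| : ℤ) : ℝ)) := by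
    intro k
    rw [← Real.exp_sum, Int.cast_sum, Finset.mul_sum]
  simp only [h2]
  refine summable_of_sum_le (c := ∏ _i : Fin ℓ, ∑' n : ℤ, Real.exp (-δ * ((|n| : ℤ) : ℝ)))
    (fun k => by positivity) fun u => ?_
  -- a finite set of frequencies lies in a box, over which the sum factorizes
  let B : Fin ℓ → Finset ℤ := fun i => u.image fun k => k i
  calc ∑ k ∈ u, ∏ i, Real.exp (-δ * ((|k i| : ℤ) : ℝ))
      ≤ ∑ k ∈ Fintype.piFinset B, ∏ i, Real.exp (-δ * ((|k i| : ℤ) : ℝ)) := by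
        refine Finset.sum_le_sum_of_subset_of_nonneg ?_ fun _ _ _ => by positivity
        intro k hk
        exact Fintype.mem_piFinset.2 fun i => Finset.mem_image_of_mem _ hk
    _ = ∏ i, ∑ n ∈ B i, Real.exp (-δ * ((|n| : ℤ) : ℝ)) := (Finset.prod_univ_sum B
          (fun _ n => Real.exp (-δ * ((|n| : ℤ) : ℝ)))).symm
    _ ≤ ∏ _i : Fin ℓ, ∑' n : ℤ, Real.exp (-δ * ((|n| : ℤ) : ℝ)) := by
        refine Finset.prod_le_prod (fun i _ => Finset.sum_nonneg fun _ _ => by positivity) ?_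
        exact fun i _ => h1.sum_le_tsum _ fun _ _ => by positivity

/-- The linear form `y ↦ 2πi k·y`. -/
def charForm {ℓ : ℕ} (k : Fin ℓ → ℤ) : (Fin ℓ → ℝ) →L[ℝ] ℂ :=
  ∑ i, (2 * Real.pi * Complex.I * (k i : ℂ)) •
    (Complex.ofRealCLM.comp (ContinuousLinearMap.proj (R := ℝ) (φ := fun _ : Fin ℓ => ℝ) i))

lemma charForm_apply {ℓ : ℕ} (k : Fin ℓ → ℤ) (y : Fin ℓ → ℝ) :
    charForm k y = 2 * Real.pi * Complex.I * ∑ i, (k i : ℂ) * (y i : ℂ) := by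
  simp [charForm, Finset.mul_sum, mul_assoc]

lemma norm_charForm_le {ℓ : ℕ} (k : Fin ℓ → ℤ) :
    ‖charForm k‖ ≤ 2 * Real.pi * ((∑ i, |k i| : ℤ) : ℝ) := by
  have hpi := Real.pi_pos
  have h0 : (0 : ℝ) ≤ ((∑ i, |k i| : ℤ) : ℝ) := by
    exact_mod_cast Finset.sum_nonneg fun i _ => abs_nonneg (k i)
  refine ContinuousLinearMap.opNorm_le_bound _ (by positivity) fun y => ?_
  rw [charForm_apply, norm_mul]
  have h1 : ‖(2 * Real.pi * Complex.I : ℂ)‖ = 2 * Real.pi := by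
    simp [abs_of_pos hpi]
  have h2 : ‖∑ i, (k i : ℂ) * (y i : ℂ)‖ ≤ ((∑ i, |k i| : ℤ) : ℝ) * ‖y‖ := by
    refine (norm_sum_le _ _).trans ?_
    push_cast
    rw [Finset.sum_mul]
    refine Finset.sum_le_sum fun i _ => ?_
    rw [norm_mul, Complex.norm_intCast, Complex.norm_real]
    gcongr
    exact norm_le_pi_norm y i
  rw [h1, mul_assoc (2 * Real.pi)]
  gcongr

lemma norm_expSeries_le (n : ℕ) :
    ‖NormedSpace.expSeries ℝ ℂ n‖ ≤ (n.factorial : ℝ)⁻¹ := by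
  simp [NormedSpace.expSeries, norm_smul]

/-- A trigonometric series with exponentially decaying coefficients is real analytic: around `x`
the `k`-th term expands as `b_k e^{2πi k·x} ∑ₙ (2πi k·y)^n / n!`. -/
lemma analyticAt_fourierSeries {ℓ : ℕ} {b : (Fin ℓ → ℤ) → ℂ} {C δ : ℝ} (hδ : 0 < δ)
    (hb : ∀ k, ‖b k‖ ≤ C * Real.exp (-δ * ((∑ i, |k i| : ℤ) : ℝ))) (x : Fin ℓ → ℝ) :
    AnalyticAt ℝ (fun θ => ∑' k, b k * torusChar k θ) x := by
  have hpi := Real.pi_pos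
  set r : NNReal := ⟨δ / (4 * Real.pi), by positivity⟩ with hr
  have hrv : (r : ℝ) = δ / (4 * Real.pi) := rfl
  have hr0 : 0 < r := by
    rw [← NNReal.coe_pos, hrv]
    positivity
  let P : (Fin ℓ → ℤ) → FormalMultilinearSeries ℝ (Fin ℓ → ℝ) ℂ := fun k =>
    (b k * torusChar k x) • (NormedSpace.expSeries ℝ ℂ).compContinuousLinearMap (charForm k)
  have hPn : ∀ k n, ‖P k n‖ * (r : ℝ) ^ n ≤
      ‖b k‖ * ((r * ‖charForm k‖) ^ n / (n.factorial : ℝ)) := by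
    intro k n
    have h1 : ‖P k n‖ ≤ ‖b k‖ * ((n.factorial : ℝ)⁻¹ * ‖charForm k‖ ^ n) := by
      change ‖(b k * torusChar k x) •
        (NormedSpace.expSeries ℝ ℂ).compContinuousLinearMap (charForm k) n‖ ≤ _
      rw [norm_smul, norm_mul, norm_torusChar, mul_one]
      gcongr
      refine (FormalMultilinearSeries.norm_compContinuousLinearMap_le _ _ _).trans ?_
      gcongr
      exact norm_expSeries_le n
    calc ‖P k n‖ * (r : ℝ) ^ n
        ≤ ‖b k‖ * ((n.factorial : ℝ)⁻¹ * ‖charForm k‖ ^ n) * (r : ℝ) ^ n := by gcongr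
      _ = ‖b k‖ * ((r * ‖charForm k‖) ^ n / (n.factorial : ℝ)) := by rw [mul_pow]; ring
  have hexp : ∀ k, HasSum (fun n : ℕ => ‖b k‖ * ((r * ‖charForm k‖) ^ n / (n.factorial : ℝ)))
      (‖b k‖ * Real.exp (r * ‖charForm k‖)) := by
    intro k
    have h := NormedSpace.expSeries_div_hasSum_exp ((r : ℝ) * ‖charForm k‖)
    rw [← Real.exp_eq_exp_ℝ] at h
    exact h.mul_left _
  refine analyticAt_tsum_of_summable (P := P) hr0 ?_ ?_
  · intro k y
    have h := NormedSpace.expSeries_div_hasSum_exp (charForm k y)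
    rw [← Complex.exp_eq_exp_ℂ] at h
    have h' := h.mul_left (b k * torusChar k x)
    have hval : b k * torusChar k x * Complex.exp (charForm k y) =
        b k * torusChar k (x + y) := by
      rw [torusChar_add, charForm_apply, mul_assoc]
      rfl
    rw [hval] at h'
    convert! h' using 2 with n
    change (b k * torusChar k x) • (NormedSpace.expSeries ℝ ℂ n) (fun _ => charForm k y) = _
    rw [NormedSpace.expSeries_apply_eq_div, smul_eq_mul]
  · refine Summable.of_nonneg_of_le (fun q => by positivity) (fun q => hPn q.1 q.2) ?_
    refine (summable_prod_of_nonneg fun q => by positivity).2 ⟨fun k => (hexp k).summable, ?_⟩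
    simp only [(hexp _).tsum_eq]
    refine Summable.of_nonneg_of_le (fun k => by positivity) (fun k => ?_)
      ((summable_exp_neg_l1 ℓ (half_pos hδ)).mul_left C)
    have h0 : (r : ℝ) * ‖charForm k‖ ≤ δ / 2 * ((∑ i, |k i| : ℤ) : ℝ) := by
      calc (r : ℝ) * ‖charForm k‖ ≤ r * (2 * Real.pi * ((∑ i, |k i| : ℤ) : ℝ)) := by
            gcongr
            exact norm_charForm_le k
        _ = δ / 2 * ((∑ i, |k i| : ℤ) : ℝ) := by
            rw [hrv]
            field_simp
            ring
    calc ‖b k‖ * Real.exp (r * ‖charForm k‖)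
        ≤ C * Real.exp (-δ * ((∑ i, |k i| : ℤ) : ℝ)) *
            Real.exp (δ / 2 * ((∑ i, |k i| : ℤ) : ℝ)) :=
          mul_le_mul (hb k) (Real.exp_le_exp.2 h0) (Real.exp_pos _).le
            ((norm_nonneg _).trans (hb k))
      _ = C * Real.exp (-(δ / 2) * ((∑ i, |k i| : ℤ) : ℝ)) := by
          rw [mul_assoc, ← Real.exp_add]
          congr 2
          ring

/-! ### Small divisors and the cohomological equation -/

/-- Small divisor estimate: `|1 - e^{2πix}| = 2|sin πx| ≥ 4 dist(x, ℤ)`. -/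
lemma small_divisor_bound {ℓ : ℕ} {ω : Fin ℓ → ℝ} {γ τ : ℝ} {k : Fin ℓ → ℤ}
    (h : ∀ q : ℤ, γ * ((∑ i, |k i| : ℤ) : ℝ) ^ (-τ) ≤ |(∑ i, (k i : ℝ) * ω i) - (q : ℝ)|) :
    4 * (γ * ((∑ i, |k i| : ℤ) : ℝ) ^ (-τ)) ≤ ‖1 - torusChar k ω‖ := by
  have hpi := Real.pi_pos
  set t : ℝ := ∑ i, (k i : ℝ) * ω i with ht
  have h1 : ‖1 - torusChar k ω‖ = 2 * |Real.sin (Real.pi * (t - round t))| := by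
    rw [torusChar_eq_exp_ofReal, norm_sub_rev, Complex.norm_exp_I_mul_ofReal_sub_one,
      Real.norm_eq_abs, abs_mul, abs_two,
      show Real.pi * (t - round t) = 2 * Real.pi * t / 2 - (round t : ℤ) * Real.pi by ring,
      Real.sin_sub_int_mul_pi, abs_mul]
    simp [abs_zpow, ht]
  have h2 : |Real.pi * (t - round t)| ≤ Real.pi / 2 := by
    rw [abs_mul, abs_of_pos hpi]
    have := abs_sub_round t
    nlinarith
  have h3 := Real.mul_abs_le_abs_sin h2
  rw [abs_mul, abs_of_pos hpi, ← mul_assoc, div_mul_cancel₀ _ hpi.ne'] at h3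
  rw [h1]
  have := h (round t)
  linarith

/-- Dividing an exponentially decaying coefficient by a Diophantine small divisor preserves
exponential decay, at half the rate. -/
lemma small_divisor_quotient_bound {C δ γ τ K A D : ℝ} (hC : 0 ≤ C) (hδ : 0 < δ) (hγ : 0 < γ)
    (hK : 1 ≤ K) (hA : A ≤ C * Real.exp (-δ * K)) (hD : 4 * (γ * K ^ (-τ)) ≤ D) :
    A / D ≤ (C * ((⌈τ⌉₊).factorial * (2 / δ) ^ ⌈τ⌉₊) / (4 * γ)) * Real.exp (-(δ / 2) * K) := by
  have hK0 : 0 < K := by linarith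
  have hpow : K ^ τ ≤ ((⌈τ⌉₊).factorial * (2 / δ) ^ ⌈τ⌉₊) * Real.exp (δ / 2 * K) := by
    have h1 : K ^ τ ≤ K ^ ⌈τ⌉₊ := by
      rw [← Real.rpow_natCast]
      exact Real.rpow_le_rpow_of_exponent_le hK (Nat.le_ceil τ)
    have h2 := Real.pow_div_factorial_le_exp (x := δ / 2 * K) (by positivity) ⌈τ⌉₊
    rw [div_le_iff₀ (by positivity), mul_pow] at h2
    calc K ^ τ ≤ K ^ ⌈τ⌉₊ := h1
      _ = (2 / δ) ^ ⌈τ⌉₊ * ((δ / 2) ^ ⌈τ⌉₊ * K ^ ⌈τ⌉₊) := by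
          rw [← mul_assoc, ← mul_pow, show 2 / δ * (δ / 2) = 1 by field_simp, one_pow, one_mul]
      _ ≤ (2 / δ) ^ ⌈τ⌉₊ * (Real.exp (δ / 2 * K) * (⌈τ⌉₊).factorial) := by gcongr
      _ = _ := by ring
  have hKτ : 0 < K ^ (-τ) := Real.rpow_pos_of_pos hK0 _
  calc A / D ≤ C * Real.exp (-δ * K) / (4 * (γ * K ^ (-τ))) := by
        gcongr
    _ = C * Real.exp (-δ * K) / (4 * γ) * K ^ τ := by
        rw [Real.rpow_neg hK0.le]
        field_simp
    _ ≤ C * Real.exp (-δ * K) / (4 * γ) *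
          (((⌈τ⌉₊).factorial * (2 / δ) ^ ⌈τ⌉₊) * Real.exp (δ / 2 * K)) := by gcongr
    _ = (C * ((⌈τ⌉₊).factorial * (2 / δ) ^ ⌈τ⌉₊) / (4 * γ)) *
          (Real.exp (-δ * K) * Real.exp (δ / 2 * K)) := by ring
    _ = _ := by
        rw [← Real.exp_add]
        congr 2
        ring

/-- On the Fourier side the cohomological equation reads `ξ̂_k (1 - e^{2πi k·ω}) = η̂_k`. -/
lemma fourierCoef_cohomological {ℓ : ℕ} {ω : Fin ℓ → ℝ} {ξ η : (Fin ℓ → ℝ) → ℝ}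
    (hper : ZPeriodic ξ) (hc : Continuous ξ) (heq : ∀ θ, ξ θ - ξ (θ + ω) = η θ)
    (k : Fin ℓ → ℤ) : fourierCoef ξ k * (1 - torusChar k ω) = fourierCoef η k := by
  have hch := continuous_torusChar (-k)
  rw [mul_sub, mul_one, mul_comm, ← fourierCoef_shift hper, fourierCoef_eq, fourierCoef_eq,
    ← integral_sub]
  · congr 1
    funext θ
    rw [← heq θ]
    push_cast
    ring
  · exact integrableOn_Icc_of_continuous (by fun_prop)
  · exact integrableOn_Icc_of_continuous (by fun_prop)

/-- A continuous function on the torus invariant under a nonresonant rotation is constant. -/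
lemma eq_torusAvg_of_invariant {ℓ : ℕ} {ω : Fin ℓ → ℝ}
    (hω : ∀ k : Fin ℓ → ℤ, k ≠ 0 → 1 - torusChar k ω ≠ 0) {D : (Fin ℓ → ℝ) → ℝ}
    (hper : ZPeriodic D) (hc : Continuous D) (hinv : ∀ θ, D θ - D (θ + ω) = 0)
    (θ : Fin ℓ → ℝ) : D θ = torusAvg D := by
  have hzero : ∀ k : Fin ℓ → ℤ, k ≠ 0 → fourierCoef D k = 0 := by
    intro k hk
    have h := fourierCoef_cohomological (η := fun _ => 0) hper hc hinv k
    have h0 : fourierCoef (fun _ : Fin ℓ → ℝ => 0) k = 0 := by simp [fourierCoef]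
    rw [h0] at h
    exact (mul_eq_zero.1 h).resolve_right (hω k hk)
  have hs : Summable (fourierCoef D) :=
    summable_of_ne_finset_zero (s := {0}) fun k hk => hzero k (by simpa using hk)
  have h1 := hasSum_fourier hper hc hs θ
  have h2 := hasSum_single (f := fun k => fourierCoef D k * torusChar k θ) 0
    fun k hk => by simp [hzero k hk]
  have h3 := h1.unique h2
  rw [torusChar_zero, mul_one, fourierCoef_zero] at h3
  exact_mod_cast h3

lemma torusAvg_sub {ℓ : ℕ} {f g : (Fin ℓ → ℝ) → ℝ} (hf : Continuous f) (hg : Continuous g) :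
    torusAvg (fun θ => f θ - g θ) = torusAvg f - torusAvg g :=
  integral_sub (integrableOn_Icc_of_continuous hf) (integrableOn_Icc_of_continuous hg)

lemma torusAvg_const {ℓ : ℕ} (c : ℝ) : torusAvg (fun _ : Fin ℓ → ℝ => c) = c := by
  simp [torusAvg, measureReal_def, Real.volume_Icc_pi]

/-- For a Diophantine rotation vector `ω` and a real analytic `η` on
`𝕋^ℓ` with zero average, the small divisors cohomological equation
`ξ(θ) − ξ(θ + ω) = η(θ)` has a unique real analytic zero-average solution, whose
nonzero Fourier coefficients are `η̂_k / (1 − e^{2πi k·ω})`; any real analytic solution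
differs from it by an additive constant. -/
theorem small_divisors_cohomological_equation
    (ℓ : ℕ) (ω : Fin ℓ → ℝ) (γ τ : ℝ) (hγ : 0 < γ) (hτ : (ℓ : ℝ) ≤ τ)
    (hdio : ∀ k : Fin ℓ → ℤ, k ≠ 0 → ∀ q : ℤ,
      γ * ((∑ i, |k i| : ℤ) : ℝ) ^ (-τ) ≤ |(∑ i, (k i : ℝ) * ω i) - (q : ℝ)|)
    (η : (Fin ℓ → ℝ) → ℝ) (hηper : ZPeriodic η)
    (hηan : ∀ x, AnalyticAt ℝ η x) (hηavg : torusAvg η = 0) :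
    ∃ ξ : (Fin ℓ → ℝ) → ℝ,
      -- ξ is a real analytic zero-average solution on the torus
      (ZPeriodic ξ ∧ (∀ x, AnalyticAt ℝ ξ x) ∧ torusAvg ξ = 0 ∧
        ∀ θ, ξ θ - ξ (θ + ω) = η θ) ∧
      -- its Fourier coefficients
      (∀ k : Fin ℓ → ℤ, k ≠ 0 →
        fourierCoef ξ k = fourierCoef η k /
          (1 - Complex.exp (2 * Real.pi * Complex.I * ∑ i, (k i : ℂ) * (ω i : ℂ)))) ∧
      -- uniqueness among zero-average real analytic solutions
      (∀ ξ' : (Fin ℓ → ℝ) → ℝ, ZPeriodic ξ' → (∀ x, AnalyticAt ℝ ξ' x) →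
        torusAvg ξ' = 0 → (∀ θ, ξ' θ - ξ' (θ + ω) = η θ) → ξ' = ξ) ∧
      -- any real analytic solution differs from ξ by an additive constant
      (∀ ξ' : (Fin ℓ → ℝ) → ℝ, ZPeriodic ξ' → (∀ x, AnalyticAt ℝ ξ' x) →
        (∀ θ, ξ' θ - ξ' (θ + ω) = η θ) → ∃ c : ℝ, ∀ θ, ξ' θ = ξ θ + c) := by
  have hK : ∀ k : Fin ℓ → ℤ, k ≠ 0 → (1 : ℝ) ≤ ((∑ i, |k i| : ℤ) : ℝ) := by
    intro k hk
    obtain ⟨i, hi⟩ := Function.ne_iff.1 hk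
    have h1 : |k i| ≤ ∑ i, |k i| :=
      Finset.single_le_sum (f := fun i => |k i|) (fun i _ => abs_nonneg (k i)) (Finset.mem_univ i)
    have h2 : (1 : ℤ) ≤ |k i| := Int.one_le_abs hi
    exact_mod_cast h2.trans h1
  have hdiv : ∀ k : Fin ℓ → ℤ, k ≠ 0 → 1 - torusChar k ω ≠ 0 := by
    intro k hk
    have h1 := small_divisor_bound (hdio k hk)
    have h2 : 0 < ((∑ i, |k i| : ℤ) : ℝ) ^ (-τ) :=
      Real.rpow_pos_of_pos (lt_of_lt_of_le one_pos (hK k hk)) _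
    exact norm_pos_iff.1 (lt_of_lt_of_le (by positivity) h1)
  have hcont : ∀ {f : (Fin ℓ → ℝ) → ℝ}, (∀ x, AnalyticAt ℝ f x) → Continuous f :=
    fun hf => continuous_iff_continuousAt.2 fun x => (hf x).continuousAt
  obtain ⟨C, δ, hδ, hC⟩ := fourierCoef_decay hηper hηan
  have hC0 : 0 ≤ C := by simpa using (norm_nonneg _).trans (hC 0)
  -- the value at `k = 0` is `0 / 0 = 0`
  let b : (Fin ℓ → ℤ) → ℂ := fun k => fourierCoef η k / (1 - torusChar k ω)
  have hη0 : fourierCoef η 0 = 0 := by rw [fourierCoef_zero, hηavg, Complex.ofReal_zero]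
  let C' : ℝ := C * ((⌈τ⌉₊).factorial * (2 / δ) ^ ⌈τ⌉₊) / (4 * γ)
  have hb : ∀ k, ‖b k‖ ≤ C' * Real.exp (-(δ / 2) * ((∑ i, |k i| : ℤ) : ℝ)) := by
    intro k
    rcases eq_or_ne k 0 with rfl | hk
    · simp only [b, hη0, zero_div, norm_zero]
      positivity
    · simp only [b, norm_div]
      exact small_divisor_quotient_bound hC0 hδ hγ (hK k hk) (hC k)
        (small_divisor_bound (hdio k hk))
  have hbsum : ∀ θ, Summable fun k => b k * torusChar k θ := by
    intro θ
    refine Summable.of_norm_bounded ((summable_exp_neg_l1 ℓ (half_pos hδ)).mul_left C') fun k => ?_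
    rw [norm_mul, norm_torusChar, mul_one]
    exact hb k
  have hηsum : Summable (fourierCoef η) :=
    Summable.of_norm_bounded ((summable_exp_neg_l1 ℓ hδ).mul_left C) hC
  let Ξ : (Fin ℓ → ℝ) → ℂ := fun θ => ∑' k, b k * torusChar k θ
  have hΞper : ZPeriodic Ξ := by
    intro θ n
    simp only [Ξ, zPeriodic_torusChar _ θ n]
  have hΞeq : ∀ θ, Ξ θ - Ξ (θ + ω) = (η θ : ℂ) := by
    intro θ
    have h1 := (hbsum θ).hasSum.sub (hbsum (θ + ω)).hasSum
    refine h1.unique ?_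
    convert! hasSum_fourier hηper (hcont hηan) hηsum θ using 2 with k
    rw [torusChar_add]
    rcases eq_or_ne k 0 with rfl | hk
    · simp [b, hη0]
    · have := hdiv k hk
      simp only [b]
      field_simp
  let ξ₀ : (Fin ℓ → ℝ) → ℝ := fun θ => (Ξ θ).re
  have hξ₀an : ∀ x, AnalyticAt ℝ ξ₀ x := fun x =>
    (Complex.reCLM.analyticAt _).comp (analyticAt_fourierSeries (half_pos hδ) hb x)
  let ξ : (Fin ℓ → ℝ) → ℝ := fun θ => ξ₀ θ - torusAvg ξ₀
  have hξan : ∀ x, AnalyticAt ℝ ξ x := fun x => (hξ₀an x).sub analyticAt_const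
  have hξper : ZPeriodic ξ := fun θ n => by simp only [ξ, ξ₀, hΞper θ n]
  have hξavg : torusAvg ξ = 0 := by
    have := torusAvg_sub (hcont hξ₀an) (continuous_const (y := torusAvg ξ₀))
    rw [torusAvg_const, sub_self] at this
    exact this
  have hξeq : ∀ θ, ξ θ - ξ (θ + ω) = η θ := by
    intro θ
    have h := congrArg Complex.re (hΞeq θ)
    rw [Complex.sub_re, Complex.ofReal_re] at h
    simp only [ξ, ξ₀]
    linarith
  have huniq : ∀ ξ' : (Fin ℓ → ℝ) → ℝ, ZPeriodic ξ' → (∀ x, AnalyticAt ℝ ξ' x) →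
      (∀ θ, ξ' θ - ξ' (θ + ω) = η θ) → ∀ θ, ξ' θ = ξ θ + torusAvg ξ' := by
    intro ξ' hper' han' heq' θ
    have h := eq_torusAvg_of_invariant hdiv (D := fun θ => ξ' θ - ξ θ)
      (fun θ n => by simp only [hper' θ n, hξper θ n]) ((hcont han').sub (hcont hξan))
      (fun θ => by linarith [heq' θ, hξeq θ]) θ
    rw [torusAvg_sub (hcont han') (hcont hξan), hξavg, sub_zero] at h
    linarith
  refine ⟨ξ, ⟨hξper, hξan, hξavg, hξeq⟩, ?_, ?_, ?_⟩
  · intro k hk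
    exact (eq_div_iff (hdiv k hk)).2 (fourierCoef_cohomological hξper (hcont hξan) hξeq k)
  · intro ξ' hper' han' havg' heq'
    funext θ
    rw [huniq ξ' hper' han' heq' θ, havg', add_zero]
  · intro ξ' hper' han' heq'
    exact ⟨torusAvg ξ', huniq ξ' hper' han' heq'⟩
end
end

section
/- Let U ⊂ ℝ^{2n} carry an exact symplectic structure with action form a and Ω(z) = Da(z)ᵀ − Da(z), let φ_t be the flow of a smooth Hamiltonian H (each φ_t exact symplectic with primitive p_t), let ω ∈ ℝ^{n−2}, T > 0, m ≥ 1, and let K_i : 𝕋^{n−2} → U, i = 0,…,m−1 (indices mod m), be smooth with errors E_i(θ) = φ_{T/m}(K_i(θ)) − K_{i+1}(θ + ω/m) (segments K_{i+1}(θ+ω/m)+sE_i(θ) assumed in U). Define η_i^{31}(θ) = −DK_{i+1}(θ + ω/m)ᵀ Ω(K_{i+1}(θ + ω/m)) E_i(θ), Δ¹a_i(θ) = ∫₀¹ Da(K_{i+1}(θ+ω/m) + s E_i(θ)) E_i(θ) ds, and Δ²a_i(θ) = ∫₀¹ (1−s) D²a(K_{i+1}(θ+ω/m) + s E_i(θ))[E_i(θ),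 E_i(θ)] ds. Then the exact identity Σ_{i=0}^{m−1} ⟨η_i^{31}⟩ = − Σ_{i=0}^{m−1} ⟨ DE_i(θ)ᵀ Δ¹a_i(θ) + DK_{i+1}(θ + ω/m)ᵀ Δ²a_i(θ) ⟩ holds; in particular Σ_i ⟨η_i^{31}⟩ is quadratically small in the errors E_i and their derivatives. -/
/-!
Write `w = K_{i+1}(θ + ω/m)` and `y = φ_{T/m}(K_i(θ)) = w + E_i`. By Taylor's formula
`Δ¹a_i = a(y) - a(w)` and `Δ²a_i = a(y) - a(w) - Da(w) E_i` (`taylor_increments`). If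
`φ_{T/m}` is exact with primitive `P`, the two integrands combine pointwise to
`η_i + (DE_iᵀ Δ¹a_i + DK_{i+1}ᵀ Δ²a_i) = DQ_iᵀ + c_i(θ) - c_{i+1}(θ + ω/m)`, where
`Q_i = P(K_i) - a(w) · E_i` is periodic and `c_i = DK_iᵀ a(K_i)` is the action density of the
`i`-th torus. On averaging, the differential of the periodic function drops out and the translation
is invisible (`average_one_step`), so the sum over `i` modulo `m` telescopes to zero.

The differentiability of `φ_{T/m}` and of its primitive is derived from the differential equation:
`flow_contDiffOn` shows that the time-`τ` map of a `C²` vector field is `C¹`, by comparison with the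
variational equation, and `flow_exact` shows that `P(z) = ∫₀^τ (α(X) - H)(φ_s z) ds` is a
differentiable primitive, `α` being the one-form `a · dz`.
-/

open Matrix MeasureTheory

noncomputable section

/-- The componentwise average `⟨f⟩ = ∫_{𝕋^ℓ} f(θ) dθ` of a vector-valued function on
the torus. -/
def torusAvgVec {ℓ k : ℕ} (f : (Fin ℓ → ℝ) → (Fin k → ℝ)) : Fin k → ℝ :=
  ∫ θ in Set.Icc (0 : Fin ℓ → ℝ) 1, f θ

/-! ### Differentiable dependence of ODE solutions on the initial value -/

/-- `x` is a solution of `x' = Y(x)` on `[0, τ]` that stays in `V`. -/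
def SolvesOn {E : Type*} [NormedAddCommGroup E] [NormedSpace ℝ E]
    (Y : E → E) (V : Set E) (τ : ℝ) (x : ℝ → E) : Prop :=
  (∀ t ∈ Set.Icc 0 τ, x t ∈ V) ∧
    ∀ t ∈ Set.Icc 0 τ, HasDerivWithinAt x (Y (x t)) (Set.Icc 0 τ) t

lemma hasDerivWithinAt_Ici_of_Icc {E : Type*} [NormedAddCommGroup E] [NormedSpace ℝ E]
    {τ t b : ℝ} (hb : b ≤ τ) {x : ℝ → E} {x' : E} (ht : t ∈ Set.Ico 0 b)
    (h : HasDerivWithinAt x x' (Set.Icc 0 τ) t) : HasDerivWithinAt x x' (Set.Ici t) t :=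
  h.mono_of_mem_nhdsWithin (Icc_mem_nhdsGE_of_mem ⟨ht.1, ht.2.trans_le hb⟩)

lemma SolvesOn.continuousOn {E : Type*} [NormedAddCommGroup E] [NormedSpace ℝ E]
    {Y : E → E} {V : Set E} {τ : ℝ} {x : ℝ → E} (h : SolvesOn Y V τ x) :
    ContinuousOn x (Set.Icc 0 τ) := fun t ht => (h.2 t ht).continuousWithinAt

lemma exists_lipschitzOnWith_of_contDiffOn {E F : Type*} [NormedAddCommGroup E] [NormedSpace ℝ E]
    [NormedAddCommGroup F] [NormedSpace ℝ F]
    {Y : E → F} {V C : Set E} (hV : IsOpen V) (hY : ContDiffOn ℝ 1 Y V) (hC : IsCompact C)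
    (hCV : C ⊆ V) : ∃ L, LipschitzOnWith L Y C := by
  apply LocallyLipschitzOn.exists_lipschitzOnWith_of_compact hC
  intro x hx
  obtain ⟨K, t, ht, hL⟩ :=
    (hY.contDiffAt (hV.mem_nhds (hCV hx))).exists_lipschitzOnWith
  exact ⟨K, t, mem_nhdsWithin_of_mem_nhds ht, hL⟩

/-- Linear equations have solutions on the whole interval on which their coefficients are
continuous. The coefficient is cut off outside a ball larger than the a priori bound, so that
Picard–Lindelöf applies on `[0, τ]` at once; by Grönwall the solution stays where the cut-off
is inactive. -/
lemma exists_linear_solution {F : Type*} [NormedAddCommGroup F] [NormedSpace ℝ F]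
    [FiniteDimensional ℝ F] {τ : ℝ} (hτ : 0 ≤ τ) (A : ℝ → F →L[ℝ] F)
    (hA : ContinuousOn A (Set.Icc 0 τ)) (x₀ : F) :
    ∃ x : ℝ → F, x 0 = x₀ ∧
      ∀ t ∈ Set.Icc 0 τ, HasDerivWithinAt x (A t (x t)) (Set.Icc 0 τ) t := by
  have : CompleteSpace F := FiniteDimensional.complete ℝ F
  have : ProperSpace F := FiniteDimensional.proper ℝ F
  obtain ⟨M, hM⟩ := isCompact_Icc.exists_bound_of_continuousOn hA
  have hM0 : 0 ≤ M := (norm_nonneg _).trans (hM 0 ⟨le_rfl, hτ⟩)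
  set R : ℝ := ‖x₀‖ * Real.exp (M * τ) + 1 with hR
  have hR0 : 0 < R := by positivity
  let b : ContDiffBump (0 : F) := ⟨R, R + 1, hR0, by linarith⟩
  let ρ : F → F := fun x => b x • x
  have hρ : ContDiff ℝ 1 ρ := (b.contDiff).smul contDiff_id
  have hρc : HasCompactSupport ρ := b.hasCompactSupport.smul_right
  obtain ⟨C, hC⟩ := ContDiff.lipschitzWith_of_hasCompactSupport hρc hρ (by simp)
  have hρle : ∀ x, ‖ρ x‖ ≤ ‖x‖ := fun x => by
    simp only [ρ, norm_smul, Real.norm_eq_abs, abs_of_nonneg b.nonneg]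
    exact mul_le_of_le_one_left (norm_nonneg _) b.le_one
  have hρR : ∀ x, ‖ρ x‖ ≤ R + 1 := fun x => by
    by_cases hx : ‖x‖ ≤ R + 1
    · exact (hρle x).trans hx
    · have : b x = 0 := b.zero_of_le_dist (by simpa [b] using (not_le.1 hx).le)
      simp only [ρ, this, zero_smul, norm_zero]; positivity
  have hρid : ∀ x, ‖x‖ ≤ R → ρ x = x := fun x hx => by
    have : b x = 1 := b.one_of_mem_closedBall (by simpa [b] using hx)
    simp [ρ, this]
  let Mn : NNReal := ⟨M, hM0⟩
  let Rn : NNReal := ⟨R + 1, by positivity⟩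
  let τn : NNReal := ⟨τ, hτ⟩
  have hPL : IsPicardLindelof (fun t x => A t (ρ x)) (⟨0, ⟨le_rfl, hτ⟩⟩ : Set.Icc 0 τ) x₀
      (Mn * Rn * τn) 0 (Mn * Rn) (Mn * C) := by
    refine ⟨fun t ht => ?_, fun x _ => ?_, fun t ht x _ => ?_, ?_⟩
    · have h1 : LipschitzWith Mn (A t) :=
        (A t).lipschitz.weaken (by exact_mod_cast hM t ht)
      exact (h1.comp hC).lipschitzOnWith
    · exact hA.clm_apply continuousOn_const
    · refine ((A t).le_opNorm _).trans ?_
      exact mul_le_mul (hM t ht) (hρR x) (norm_nonneg _) hM0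
    · change M * (R + 1) * max (τ - 0) (0 - 0) ≤ M * (R + 1) * τ - 0
      simp [hτ]
  obtain ⟨x, hx0, hx⟩ := hPL.exists_eq_forall_mem_Icc_hasDerivWithinAt₀
  have hx0' : x 0 = x₀ := hx0
  refine ⟨x, hx0', fun t ht => ?_⟩
  have hbd := norm_le_gronwallBound_of_norm_deriv_right_le (f := x)
    (f' := fun t => A t (ρ (x t))) (δ := ‖x₀‖) (K := M) (ε := 0)
    (fun t ht => (hx t ht).continuousWithinAt)
    (fun t ht => hasDerivWithinAt_Ici_of_Icc le_rfl ht (hx t ⟨ht.1, ht.2.le⟩)) (by rw [hx0'])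
    (fun t ht => by
      rw [add_zero]
      refine ((A t).le_opNorm _).trans ?_
      exact mul_le_mul (hM t ⟨ht.1, ht.2.le⟩) (hρle _) (norm_nonneg _) hM0) t ht
  have hle : ‖x t‖ ≤ R := by
    rw [gronwallBound_ε0] at hbd
    refine hbd.trans ?_
    have : Real.exp (M * (t - 0)) ≤ Real.exp (M * τ) :=
      Real.exp_le_exp.2 (mul_le_mul_of_nonneg_left (by linarith [ht.2]) hM0)
    have := mul_le_mul_of_nonneg_left this (norm_nonneg x₀)
    linarith
  have := hx t ht
  rwa [hρid _ hle] at this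

/-- A compact tube around a solution inside the domain of the vector field. -/
lemma SolvesOn.exists_tube {E : Type*} [NormedAddCommGroup E] [NormedSpace ℝ E]
    [FiniteDimensional ℝ E] {Y : E → E} {V : Set E} (hV : IsOpen V) {τ : ℝ} {x : ℝ → E}
    (h : SolvesOn Y V τ x) :
    ∃ r > 0, ∃ C : Set E, IsCompact C ∧ C ⊆ V ∧
      ∀ t ∈ Set.Icc 0 τ, Metric.closedBall (x t) r ⊆ C := by
  have : ProperSpace E := FiniteDimensional.proper ℝ E
  have hO : IsCompact (x '' Set.Icc 0 τ) := isCompact_Icc.image_of_continuousOn h.continuousOn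
  obtain ⟨r, hr, hrV⟩ := hO.exists_cthickening_subset_open hV
    (by rintro _ ⟨t, ht, rfl⟩; exact h.1 t ht)
  exact ⟨r, hr, _, hO.cthickening, hrV, fun t ht =>
    Metric.closedBall_subset_cthickening (Set.mem_image_of_mem _ ht) _⟩

/-- Solutions depend on their initial value in a Lipschitz way, uniformly on `[0, τ]`. -/
lemma flow_lipschitz {E : Type*} [NormedAddCommGroup E] [NormedSpace ℝ E]
    [FiniteDimensional ℝ E] {Y : E → E} {V : Set E} (hV : IsOpen V) (hY : ContDiffOn ℝ 1 Y V)
    {τ : ℝ} (Φ : E → ℝ → E) (hΦ0 : ∀ z ∈ V, Φ z 0 = z)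
    (hΦ : ∀ z ∈ V, SolvesOn Y V τ (Φ z)) {z₀ : E} (hz₀ : z₀ ∈ V) :
    ∃ C : ℝ, 0 ≤ C ∧ ∀ᶠ z in nhds z₀, ∀ t ∈ Set.Icc 0 τ, ‖Φ z t - Φ z₀ t‖ ≤ C * ‖z - z₀‖ := by
  obtain ⟨r, hr, S, hS, hSV, hball⟩ := (hΦ z₀ hz₀).exists_tube hV
  obtain ⟨L, hL⟩ := exists_lipschitzOnWith_of_contDiffOn hV hY hS hSV
  refine ⟨Real.exp (L * τ), (Real.exp_pos _).le, ?_⟩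
  have hsmall : ∀ᶠ z in nhds z₀, Real.exp (L * τ) * ‖z - z₀‖ < r := by
    have : Filter.Tendsto (fun z => Real.exp (L * τ) * ‖z - z₀‖) (nhds z₀) (nhds 0) := by
      have h : Continuous fun z => Real.exp (L * τ) * ‖z - z₀‖ := by fun_prop
      simpa using h.tendsto z₀
    exact this.eventually (gt_mem_nhds hr)
  filter_upwards [hsmall, hV.mem_nhds hz₀] with z hz hzV
  have hc := (hΦ z hzV).continuousOn
  have hc₀ := (hΦ z₀ hz₀).continuousOn
  -- the Grönwall estimate holds as long as the solution stays in the tube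
  have key : ∀ b ∈ Set.Icc 0 τ, (∀ t ∈ Set.Ico 0 b, ‖Φ z t - Φ z₀ t‖ ≤ r) →
      ‖Φ z b - Φ z₀ b‖ ≤ Real.exp (L * τ) * ‖z - z₀‖ := by
    intro b hb hin
    have hsub : Set.Icc 0 b ⊆ Set.Icc 0 τ := Set.Icc_subset_Icc_right hb.2
    have h := dist_le_of_trajectories_ODE_of_mem (v := fun _ => Y) (s := fun _ => S) (K := L)
      (f := Φ z) (g := Φ z₀) (a := 0) (b := b) (δ := ‖z - z₀‖) (fun _ _ => hL)
      (hc.mono hsub)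
      (fun t ht => hasDerivWithinAt_Ici_of_Icc hb.2 ht ((hΦ z hzV).2 t (hsub ⟨ht.1, ht.2.le⟩)))
      (fun t ht => hball t (hsub ⟨ht.1, ht.2.le⟩)
        (by rw [Metric.mem_closedBall, dist_eq_norm]; exact hin t ht))
      (hc₀.mono hsub)
      (fun t ht => hasDerivWithinAt_Ici_of_Icc hb.2 ht ((hΦ z₀ hz₀).2 t (hsub ⟨ht.1, ht.2.le⟩)))
      (fun t ht => hball t (hsub ⟨ht.1, ht.2.le⟩) (Metric.mem_closedBall_self hr.le))
      (by rw [hΦ0 z hzV, hΦ0 z₀ hz₀, dist_eq_norm]) b ⟨hb.1, le_rfl⟩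
    rw [dist_eq_norm, mul_comm] at h
    refine h.trans (mul_le_mul_of_nonneg_right (Real.exp_le_exp.2 ?_) (norm_nonneg _))
    exact mul_le_mul_of_nonneg_left (by linarith [hb.2]) L.2
  -- the first exit time from the tube would contradict the estimate
  have hin : ∀ t ∈ Set.Icc 0 τ, ‖Φ z t - Φ z₀ t‖ < r := by
    by_contra! hcon
    obtain ⟨t, ht, htr⟩ := hcon
    let B : Set ℝ := Set.Icc 0 τ ∩ (fun t => ‖Φ z t - Φ z₀ t‖) ⁻¹' Set.Ici r
    have hBc : IsClosed B :=
      ((hc.sub hc₀).norm).preimage_isClosed_of_isClosed isClosed_Icc isClosed_Ici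
    have hBb : BddBelow B := ⟨0, fun s hs => hs.1.1⟩
    have hmem := hBc.csInf_mem ⟨t, ht, htr⟩ hBb
    have h1 := key (sInf B) hmem.1 (fun s hs => by
      by_contra! hs'
      exact absurd (csInf_le hBb ⟨⟨hs.1, hs.2.le.trans hmem.1.2⟩, hs'.le⟩) (not_le.2 hs.2))
    have h2 : r ≤ ‖Φ z (sInf B) - Φ z₀ (sInf B)‖ := hmem.2
    linarith
  intro t ht
  exact key t ht (fun s hs => (hin s ⟨hs.1, hs.2.le.trans ht.2⟩).le)

/-- The solution of a `C²` differential equation is differentiable in the initial value, and its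
derivative solves the variational equation. -/
lemma flow_hasFDerivAt {E : Type*} [NormedAddCommGroup E] [NormedSpace ℝ E]
    [FiniteDimensional ℝ E] {Y : E → E} {V : Set E} (hV : IsOpen V) (hY : ContDiffOn ℝ 2 Y V)
    {τ : ℝ} (hτ : 0 ≤ τ) (Φ : E → ℝ → E) (hΦ0 : ∀ z ∈ V, Φ z 0 = z)
    (hΦ : ∀ z ∈ V, SolvesOn Y V τ (Φ z)) {z₀ : E} (hz₀ : z₀ ∈ V) :
    ∃ W : ℝ → E →L[ℝ] E, W 0 = ContinuousLinearMap.id ℝ E ∧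
      (∀ t ∈ Set.Icc 0 τ,
        HasDerivWithinAt W ((fderiv ℝ Y (Φ z₀ t)).comp (W t)) (Set.Icc 0 τ) t) ∧
      ∀ t ∈ Set.Icc 0 τ, HasFDerivAt (fun z => Φ z t) (W t) z₀ := by
  have hY1 : ContDiffOn ℝ 1 Y V := hY.of_le (by norm_num)
  have hDY : ContDiffOn ℝ 1 (fderiv ℝ Y) V := hY.fderiv_of_isOpen hV (by norm_num)
  have hc₀ := (hΦ z₀ hz₀).continuousOn
  have hA : ContinuousOn (fun t => fderiv ℝ Y (Φ z₀ t)) (Set.Icc 0 τ) :=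
    hDY.continuousOn.comp hc₀ (hΦ z₀ hz₀).1
  obtain ⟨W, hW0, hW⟩ := exists_linear_solution hτ
    (fun t => ContinuousLinearMap.compL ℝ E E E (fderiv ℝ Y (Φ z₀ t)))
    ((ContinuousLinearMap.continuous _).comp_continuousOn hA) (ContinuousLinearMap.id ℝ E)
  refine ⟨W, hW0, hW, ?_⟩
  obtain ⟨r, hr, S, hS, hSV, hball⟩ := (hΦ z₀ hz₀).exists_tube hV
  obtain ⟨M, hM⟩ := exists_lipschitzOnWith_of_contDiffOn hV hDY hS hSV
  obtain ⟨B, hB⟩ := isCompact_Icc.exists_bound_of_continuousOn hA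
  obtain ⟨C, hC0, hC⟩ := flow_lipschitz hV hY1 Φ hΦ0 hΦ hz₀
  -- second-order Taylor estimate for `Y` along the reference solution
  have taylor : ∀ t ∈ Set.Icc 0 τ, ∀ y, ‖y - Φ z₀ t‖ ≤ r →
      ‖Y y - Y (Φ z₀ t) - fderiv ℝ Y (Φ z₀ t) (y - Φ z₀ t)‖ ≤ M * ‖y - Φ z₀ t‖ ^ 2 := by
    intro t ht y hy
    have hsub : Metric.closedBall (Φ z₀ t) ‖y - Φ z₀ t‖ ⊆ S :=
      (Metric.closedBall_subset_closedBall hy).trans (hball t ht)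
    have hxS : Φ z₀ t ∈ S := hsub (Metric.mem_closedBall_self (norm_nonneg _))
    have := (convex_closedBall (Φ z₀ t) ‖y - Φ z₀ t‖).norm_image_sub_le_of_norm_hasFDerivWithin_le'
      (f := Y) (f' := fderiv ℝ Y) (φ := fderiv ℝ Y (Φ z₀ t)) (C := M * ‖y - Φ z₀ t‖)
      (fun x hx => ((hY1.differentiableOn (by norm_num)).differentiableAt
        (hV.mem_nhds (hSV (hsub hx)))).hasFDerivAt.hasFDerivWithinAt)
      (fun x hx => by
        have h1 := hM.dist_le_mul x (hsub hx) _ hxS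
        rw [dist_eq_norm] at h1
        exact h1.trans (mul_le_mul_of_nonneg_left (Metric.mem_closedBall.1 hx) M.2))
      (Metric.mem_closedBall_self (norm_nonneg _))
      (by rw [Metric.mem_closedBall, dist_eq_norm] : y ∈ _)
    rw [pow_two, ← mul_assoc]; exact this
  intro t ht
  set B' : ℝ := |B| + 1 with hB'
  have hB'0 : 0 < B' := by positivity
  have hsmall : ∀ᶠ z in nhds z₀, C * ‖z - z₀‖ < r := by
    have : Filter.Tendsto (fun z => C * ‖z - z₀‖) (nhds z₀) (nhds 0) := by
      have h : Continuous fun z => C * ‖z - z₀‖ := by fun_prop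
      simpa using h.tendsto z₀
    exact this.eventually (gt_mem_nhds hr)
  have hmain : (fun z => Φ z t - Φ z₀ t - W t (z - z₀)) =O[nhds z₀] fun z => ‖z - z₀‖ ^ 2 := by
    refine Asymptotics.IsBigO.of_bound (M * C ^ 2 / B' * (Real.exp (B' * t) - 1)) ?_
    filter_upwards [hC, hsmall, hV.mem_nhds hz₀] with z hz hzr hzV
    have hc := (hΦ z hzV).continuousOn
    have hWz : ∀ s ∈ Set.Icc 0 τ, HasDerivWithinAt (fun s => W s (z - z₀))
        (fderiv ℝ Y (Φ z₀ s) (W s (z - z₀))) (Set.Icc 0 τ) s := fun s hs => by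
      simpa using (hW s hs).clm_apply (hasDerivWithinAt_const s _ (z - z₀))
    have hd : ∀ s ∈ Set.Icc 0 τ, HasDerivWithinAt (fun s => Φ z s - Φ z₀ s - W s (z - z₀))
        (Y (Φ z s) - Y (Φ z₀ s) - fderiv ℝ Y (Φ z₀ s) (W s (z - z₀))) (Set.Icc 0 τ) s :=
      fun s hs => (((hΦ z hzV).2 s hs).sub ((hΦ z₀ hz₀).2 s hs)).sub (hWz s hs)
    have hg := norm_le_gronwallBound_of_norm_deriv_right_le
      (δ := 0) (K := B') (ε := M * C ^ 2 * ‖z - z₀‖ ^ 2)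
      (fun s hs => (hd s hs).continuousWithinAt)
      (fun s hs => hasDerivWithinAt_Ici_of_Icc le_rfl hs (hd s ⟨hs.1, hs.2.le⟩))
      (by simp [hΦ0 z hzV, hΦ0 z₀ hz₀, hW0])
      (fun s hs => by
        have hs' : s ∈ Set.Icc 0 τ := ⟨hs.1, hs.2.le⟩
        have h1 := taylor s hs' (Φ z s) ((hz s hs').trans hzr.le)
        have h2 : M * ‖Φ z s - Φ z₀ s‖ ^ 2 ≤ M * C ^ 2 * ‖z - z₀‖ ^ 2 := by
          rw [mul_assoc, ← mul_pow]
          exact mul_le_mul_of_nonneg_left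
            (pow_le_pow_left₀ (norm_nonneg _) (hz s hs') 2) M.2
        have h3 : ‖fderiv ℝ Y (Φ z₀ s) (Φ z s - Φ z₀ s - W s (z - z₀))‖ ≤
            B' * ‖Φ z s - Φ z₀ s - W s (z - z₀)‖ :=
          ((fderiv ℝ Y (Φ z₀ s)).le_opNorm _).trans (mul_le_mul_of_nonneg_right
            ((hB s hs').trans (by rw [hB']; linarith [le_abs_self B])) (norm_nonneg _))
        have h4 : Y (Φ z s) - Y (Φ z₀ s) - fderiv ℝ Y (Φ z₀ s) (W s (z - z₀)) =
            fderiv ℝ Y (Φ z₀ s) (Φ z s - Φ z₀ s - W s (z - z₀)) +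
            (Y (Φ z s) - Y (Φ z₀ s) - fderiv ℝ Y (Φ z₀ s) (Φ z s - Φ z₀ s)) := by
          simp only [map_sub]; abel
        rw [h4]
        exact (norm_add_le _ _).trans (add_le_add h3 (h1.trans h2))) t ht
    rw [gronwallBound_of_K_ne_0 hB'0.ne'] at hg
    refine hg.trans (le_of_eq ?_)
    rw [Real.norm_of_nonneg (by positivity)]
    simp only [sub_zero, zero_mul, zero_add]
    ring
  have h0 : HasFDerivAt (fun z => Φ z t - Φ z₀ t - W t (z - z₀)) (0 : E →L[ℝ] E) z₀ :=
    hmain.hasFDerivAt (by norm_num)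
  have h1 := (h0.add ((W t).hasFDerivAt.comp z₀ ((hasFDerivAt_id z₀).sub_const z₀))).add_const
    (Φ z₀ t)
  refine (h1.congr_fderiv (by ext; simp)).congr_of_eventuallyEq (Filter.Eventually.of_forall ?_)
  intro z
  simp

/-- The time-`τ` map of a `C²` differential equation is `C¹`. Its derivative is continuous because
the pair of the flow and its derivative solves the variational system, whose right-hand side is
`C¹`. -/
lemma flow_contDiffOn {E : Type*} [NormedAddCommGroup E] [NormedSpace ℝ E]
    [FiniteDimensional ℝ E] {Y : E → E} {V : Set E} (hV : IsOpen V) (hY : ContDiffOn ℝ 2 Y V)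
    {τ : ℝ} (hτ : 0 ≤ τ) (Φ : E → ℝ → E) (hΦ0 : ∀ z ∈ V, Φ z 0 = z)
    (hΦ : ∀ z ∈ V, SolvesOn Y V τ (Φ z)) :
    ContDiffOn ℝ 1 (fun z => Φ z τ) V := by
  have hτm : τ ∈ Set.Icc 0 τ := ⟨hτ, le_rfl⟩
  choose! W hW0 hW hWd using fun z (hz : z ∈ V) => flow_hasFDerivAt hV hY hτ Φ hΦ0 hΦ hz
  have hDY : ContDiffOn ℝ 1 (fderiv ℝ Y) V := hY.fderiv_of_isOpen hV (by norm_num)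
  let Y2 : E × E → E × E := fun p => (Y p.1, fderiv ℝ Y p.1 p.2)
  let Φ2 : E × E → ℝ → E × E := fun p t => (Φ p.1 t, W p.1 t p.2)
  have hV2 : IsOpen (V ×ˢ (Set.univ : Set E)) := hV.prod isOpen_univ
  have hY2 : ContDiffOn ℝ 1 Y2 (V ×ˢ (Set.univ : Set E)) := by
    have hf : ContDiffOn ℝ 1 (Prod.fst : E × E → E) (V ×ˢ (Set.univ : Set E)) :=
      contDiff_fst.contDiffOn
    have hm : Set.MapsTo (Prod.fst : E × E → E) (V ×ˢ (Set.univ : Set E)) V := fun p hp => hp.1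
    exact ((hY.of_le (by norm_num)).comp hf hm).prodMk
      ((hDY.comp hf hm).clm_apply contDiff_snd.contDiffOn)
  have hΦ2 : ∀ p ∈ V ×ˢ (Set.univ : Set E), SolvesOn Y2 (V ×ˢ (Set.univ : Set E)) τ (Φ2 p) := by
    intro p hp
    refine ⟨fun t ht => ⟨(hΦ _ hp.1).1 t ht, trivial⟩, fun t ht => ?_⟩
    refine ((hΦ _ hp.1).2 t ht).prodMk ?_
    simpa using (hW _ hp.1 t ht).clm_apply (hasDerivWithinAt_const t _ p.2)
  have hcont : ∀ v, ContinuousOn (fun z => W z τ v) V := by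
    intro v z hz
    obtain ⟨C, -, hC⟩ := flow_lipschitz hV2 hY2 Φ2
      (fun p hp => by simp [Φ2, hΦ0 _ hp.1, hW0 _ hp.1]) hΦ2 (z₀ := (z, v)) ⟨hz, trivial⟩
    have hC' : ∀ᶠ z' in nhds z, ‖W z' τ v - W z τ v‖ ≤ C * ‖z' - z‖ := by
      have ht : Filter.Tendsto (fun z' : E => (z', v)) (nhds z) (nhds (z, v)) :=
        (Continuous.prodMk_left v).tendsto z
      filter_upwards [ht.eventually hC] with z' hz'
      have h1 := hz' τ hτm
      have h2 : ‖(z', v) - (z, v)‖ = ‖z' - z‖ := by simp [Prod.norm_def]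
      rw [h2] at h1
      exact (norm_snd_le (Φ2 (z', v) τ - Φ2 (z, v) τ)).trans h1
    refine ContinuousAt.continuousWithinAt ?_
    rw [ContinuousAt, tendsto_iff_norm_sub_tendsto_zero]
    refine squeeze_zero' (Filter.Eventually.of_forall fun _ => norm_nonneg _) hC' ?_
    have h : Continuous fun z' => C * ‖z' - z‖ := by fun_prop
    simpa using h.tendsto z
  have hWc : ContinuousOn (fun z => W z τ) V := continuousOn_clm_apply.2 hcont
  rw [show (1 : WithTop ℕ∞) = 0 + 1 by norm_num, contDiffOn_succ_iff_fderiv_of_isOpen hV]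
  refine ⟨fun z hz => (hWd z hz τ hτm).differentiableAt.differentiableWithinAt, by simp, ?_⟩
  rw [contDiffOn_zero]
  exact hWc.congr fun z hz => (hWd z hz τ hτm).fderiv

/-! ### Hamiltonian flows are exact symplectic -/

/-- The time-`τ` map `φ` of a Hamiltonian flow satisfies `φ^* α - α = dP`, where
`P(z) = ∫₀^τ (α(X) - H)(φ_s z) ds`. The derivative of `P` is obtained by
adjoining the equation `u' = (α(X) - H)(z)` to the flow and using its variational equation. -/
lemma flow_exact {E : Type*} [NormedAddCommGroup E] [NormedSpace ℝ E]
    [FiniteDimensional ℝ E] {X : E → E} {V : Set E} (hV : IsOpen V) (hX : ContDiffOn ℝ 2 X V)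
    {α : E → E →L[ℝ] ℝ} (hα : ContDiffOn ℝ 2 α V) {H : E → ℝ} (hH : ContDiffOn ℝ 2 H V)
    (hXH : ∀ z ∈ V, ∀ w, fderiv ℝ α z w (X z) - fderiv ℝ α z (X z) w = fderiv ℝ H z w)
    {τ : ℝ} (hτ : 0 ≤ τ) (Φ : E → ℝ → E) (hΦ0 : ∀ z ∈ V, Φ z 0 = z)
    (hΦV : ∀ z ∈ V, ∀ t, Φ z t ∈ V)
    (hΦ : ∀ z ∈ V, ∀ t, HasDerivAt (Φ z) (X (Φ z t)) t) :
    ∃ P : E → ℝ, ∀ z ∈ V,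
      HasFDerivAt P ((α (Φ z τ)).comp (fderiv ℝ (fun z => Φ z τ) z) - α z) z := by
  have hτm : τ ∈ Set.Icc 0 τ := ⟨hτ, le_rfl⟩
  let g : E → ℝ := fun z => α z (X z) - H z
  have hg : ContDiffOn ℝ 2 g V := (hα.clm_apply hX).sub hH
  let Y : E × ℝ → E × ℝ := fun p => (X p.1, g p.1)
  let Φ2 : E × ℝ → ℝ → E × ℝ := fun p t => (Φ p.1 t, p.2 + ∫ s in (0 : ℝ)..t, g (Φ p.1 s))
  have hV2 : IsOpen (V ×ˢ (Set.univ : Set ℝ)) := hV.prod isOpen_univ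
  have hf : ContDiffOn ℝ 2 (Prod.fst : E × ℝ → E) (V ×ˢ (Set.univ : Set ℝ)) :=
    contDiff_fst.contDiffOn
  have hm : Set.MapsTo (Prod.fst : E × ℝ → E) (V ×ˢ (Set.univ : Set ℝ)) V := fun p hp => hp.1
  have hY : ContDiffOn ℝ 2 Y (V ×ˢ (Set.univ : Set ℝ)) :=
    (hX.comp hf hm).prodMk (hg.comp hf hm)
  have hΦc : ∀ z ∈ V, Continuous (Φ z) := fun z hz =>
    continuous_iff_continuousAt.2 fun t => (hΦ z hz t).continuousAt
  have hgc : ∀ z ∈ V, Continuous fun s => g (Φ z s) := fun z hz =>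
    hg.continuousOn.comp_continuous (hΦc z hz) (hΦV z hz)
  have hΦ2 : ∀ p ∈ V ×ˢ (Set.univ : Set ℝ), SolvesOn Y (V ×ˢ (Set.univ : Set ℝ)) τ (Φ2 p) := by
    intro p hp
    refine ⟨fun t _ => ⟨hΦV _ hp.1 t, trivial⟩, fun t _ => ?_⟩
    exact ((hΦ _ hp.1 t).prodMk
      (((hgc _ hp.1).integral_hasStrictDerivAt 0 t).hasDerivAt.const_add p.2)).hasDerivWithinAt
  refine ⟨fun z => ∫ s in (0 : ℝ)..τ, g (Φ z s), fun z hz => ?_⟩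
  obtain ⟨W, hW0, hW, hWd⟩ := flow_hasFDerivAt hV2 hY hτ Φ2
    (fun p hp => by simp [Φ2, hΦ0 _ hp.1]) hΦ2 (z₀ := (z, 0)) ⟨hz, trivial⟩
  let ι : E →L[ℝ] E × ℝ := ContinuousLinearMap.inl ℝ E ℝ
  have hι : HasFDerivAt (fun z : E => (z, (0 : ℝ))) ι z := hasFDerivAt_prodMk_left z 0
  have hcomp : HasFDerivAt (fun z' => Φ2 (z', 0) τ) ((W τ).comp ι) z :=
    (hWd τ hτm).comp z hι
  have hφd : HasFDerivAt (fun z => Φ z τ) ((ContinuousLinearMap.fst ℝ E ℝ).comp ((W τ).comp ι)) z :=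
    hcomp.fst
  have hPd : HasFDerivAt (fun z => ∫ s in (0 : ℝ)..τ, g (Φ z s))
      ((ContinuousLinearMap.snd ℝ E ℝ).comp ((W τ).comp ι)) z := by
    simpa [Φ2] using hcomp.snd
  rw [hφd.fderiv]
  refine hPd.congr_fderiv ?_
  ext v
  -- both sides satisfy the same differential equation in time
  let w : ℝ → E := fun t => (W t (v, 0)).1
  let u : ℝ → ℝ := fun t => (W t (v, 0)).2
  have hΦzV := hΦV z hz
  have hdX : ∀ y ∈ V, HasFDerivAt X (fderiv ℝ X y) y := fun y hy =>
    ((hX.differentiableOn (by norm_num)).differentiableAt (hV.mem_nhds hy)).hasFDerivAt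
  have hdα : ∀ y ∈ V, HasFDerivAt α (fderiv ℝ α y) y := fun y hy =>
    ((hα.differentiableOn (by norm_num)).differentiableAt (hV.mem_nhds hy)).hasFDerivAt
  have hdH : ∀ y ∈ V, HasFDerivAt H (fderiv ℝ H y) y := fun y hy =>
    ((hH.differentiableOn (by norm_num)).differentiableAt (hV.mem_nhds hy)).hasFDerivAt
  have hdg : ∀ y ∈ V, HasFDerivAt g
      (((α y).comp (fderiv ℝ X y) + (fderiv ℝ α y).flip (X y)) - fderiv ℝ H y) y := fun y hy =>
    ((hdα y hy).clm_apply (hdX y hy)).sub (hdH y hy)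
  have hYd : ∀ t, HasFDerivAt Y (((fderiv ℝ X (Φ z t)).comp (ContinuousLinearMap.fst ℝ E ℝ)).prod
      ((((α (Φ z t)).comp (fderiv ℝ X (Φ z t)) + (fderiv ℝ α (Φ z t)).flip (X (Φ z t)))
        - fderiv ℝ H (Φ z t)).comp (ContinuousLinearMap.fst ℝ E ℝ))) (Φ2 (z, 0) t) := fun t =>
    (HasFDerivAt.comp (Φ2 (z, 0) t) (hdX _ (hΦzV t)) hasFDerivAt_fst).prodMk
      (HasFDerivAt.comp (Φ2 (z, 0) t) (hdg _ (hΦzV t)) hasFDerivAt_fst)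
  have hWv : ∀ t ∈ Set.Icc 0 τ, HasDerivWithinAt (fun t => W t (v, 0))
      (fderiv ℝ Y (Φ2 (z, 0) t) (W t (v, 0))) (Set.Icc 0 τ) t := fun t ht => by
    simpa using (hW t ht).clm_apply (hasDerivWithinAt_const t _ (v, (0 : ℝ)))
  have hw : ∀ t ∈ Set.Icc 0 τ,
      HasDerivWithinAt w (fderiv ℝ X (Φ z t) (w t)) (Set.Icc 0 τ) t := fun t ht => by
    have h := (hWv t ht).fst
    rw [(hYd t).fderiv] at h
    exact h
  have hu : ∀ t ∈ Set.Icc 0 τ, HasDerivWithinAt u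
      ((α (Φ z t) (fderiv ℝ X (Φ z t) (w t)) + fderiv ℝ α (Φ z t) (w t) (X (Φ z t)))
        - fderiv ℝ H (Φ z t) (w t)) (Set.Icc 0 τ) t := fun t ht => by
    have h := (hWv t ht).snd
    rw [(hYd t).fderiv] at h
    exact h
  have hdiff : ∀ t ∈ Set.Icc 0 τ,
      HasDerivWithinAt (fun t => u t - α (Φ z t) (w t)) 0 (Set.Icc 0 τ) t := fun t ht => by
    have h1 : HasDerivAt (fun t => α (Φ z t)) (fderiv ℝ α (Φ z t) (X (Φ z t))) t :=
      (hdα _ (hΦzV t)).comp_hasDerivAt t (hΦ z hz t)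
    have h2 := (hu t ht).sub ((h1.hasDerivWithinAt (s := Set.Icc 0 τ)).clm_apply (hw t ht))
    refine h2.congr_deriv ?_
    have := hXH _ (hΦzV t) (w t)
    linarith
  have hconst := constant_of_has_deriv_right_zero
    (fun t ht => (hdiff t ht).continuousWithinAt)
    (fun t ht => hasDerivWithinAt_Ici_of_Icc le_rfl ht (hdiff t ⟨ht.1, ht.2.le⟩)) τ hτm
  have hw0 : w 0 = v := by simp [w, hW0]
  have hu0 : u 0 = 0 := by simp [u, hW0]
  rw [hw0, hu0, hΦ0 z hz] at hconst
  change u τ = α (Φ z τ) (w τ) - α z v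
  linarith

/-! ### Averages over the torus -/

/-- The average over the torus of a partial derivative of a periodic function vanishes. -/
lemma integral_partial_eq_zero {ℓ : ℕ} {Q : (Fin ℓ → ℝ) → ℝ}
    {Q' : (Fin ℓ → ℝ) → (Fin ℓ → ℝ) →L[ℝ] ℝ} (hQ : ∀ θ, HasFDerivAt Q (Q' θ) θ)
    (hQ' : Continuous Q') (hper : ZPeriodic Q) (j : Fin ℓ) :
    ∫ θ in Set.Icc (0 : Fin ℓ → ℝ) 1, Q' θ (Pi.single j 1) = 0 := by
  obtain _ | ℓ := ℓ
  · exact j.elim0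
  have hQc : Continuous Q := continuous_iff_continuousAt.2 fun θ => (hQ θ).continuousAt
  have hsum : ∀ θ, ∑ i, (if i = j then Q' θ else 0) (Pi.single i 1) = Q' θ (Pi.single j 1) := by
    intro θ
    rw [Finset.sum_eq_single j]
    · simp
    · intro i _ hi; simp [hi]
    · simp
  have h := integral_divergence_of_hasFDerivAt_off_countable' (0 : Fin (ℓ + 1) → ℝ) 1
    (fun _ => by simp) (fun i => if i = j then Q else 0)
    (fun i θ => if i = j then Q' θ else 0) ∅ Set.countable_empty
    (fun i => by
      split_ifs
      · exact hQc.continuousOn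
      · exact continuousOn_const)
    (fun θ _ i => by
      split_ifs
      · exact hQ θ
      · exact hasFDerivAt_const 0 θ)
    (by
      simp only [hsum]
      exact (hQ'.clm_apply continuous_const).continuousOn.integrableOn_compact isCompact_Icc)
  simp only [hsum] at h
  rw [h]
  refine Finset.sum_eq_zero fun i _ => ?_
  -- opposite faces differ by an integer translation
  split_ifs with hi
  · rw [sub_eq_zero]
    refine integral_congr_ae (Filter.Eventually.of_forall fun x => ?_)
    have := hper (i.insertNth ((0 : Fin (ℓ + 1) → ℝ) i) x) (Pi.single i 1)
    dsimp only
    rw [← this]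
    congr 1
    ext k
    refine Fin.succAboveCases i ?_ (fun k => ?_) k
    · simp
    · simp
  · simp

/-- Integrals of periodic functions over the unit cube are translation invariant: up to null sets,
the cube and its translate are fundamental domains of the integer lattice. -/
lemma setIntegral_Icc_shift {ℓ : ℕ} {F : Type*} [NormedAddCommGroup F] [NormedSpace ℝ F]
    {f : (Fin ℓ → ℝ) → F} (hper : ZPeriodic f) (ρ : Fin ℓ → ℝ) :
    ∫ θ in Set.Icc (0 : Fin ℓ → ℝ) 1, f (θ + ρ) = ∫ θ in Set.Icc (0 : Fin ℓ → ℝ) 1, f θ := by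
  let b := Pi.basisFun ℝ (Fin ℓ)
  let D := ZSpan.fundamentalDomain b
  have hD : (D : Set (Fin ℓ → ℝ)) =ᵐ[volume] Set.Icc 0 1 := by
    have h1 : D = Set.univ.pi fun _ => Set.Ico (0 : ℝ) 1 := ZSpan.fundamentalDomain_pi_basisFun
    rw [h1]
    exact Measure.univ_pi_Ico_ae_eq_Icc
  have hfd := ZSpan.isAddFundamentalDomain b (volume : Measure (Fin ℓ → ℝ))
  have hinv : ∀ (g : Submodule.span ℤ (Set.range b)) (x : Fin ℓ → ℝ), f (g +ᵥ x) = f x := by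
    intro g x
    have hg := (b.mem_span_iff_repr_mem ℤ (g : Fin ℓ → ℝ)).1 g.2
    choose k hk using hg
    have : (g +ᵥ x : Fin ℓ → ℝ) = x + fun i => (k i : ℝ) := by
      ext i
      have := hk i
      simp only [b, Pi.basisFun_repr] at this
      rw [Submodule.vadd_def, vadd_eq_add, add_comm, Pi.add_apply, Pi.add_apply, ← this]
      simp
    rw [this, hper]
  have : VAddInvariantMeasure (Submodule.span ℤ (Set.range b)) (Fin ℓ → ℝ) volume :=
    ⟨fun g s _ => measure_preimage_add volume (g : Fin ℓ → ℝ) s⟩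
  have hfd2 := hfd.vadd_of_comm ρ
  have h := hfd2.setIntegral_eq hfd hinv
  rw [← setIntegral_congr_set hD, ← setIntegral_congr_set hD, ← h]
  have h3 := (measurePreserving_add_right (volume : Measure (Fin ℓ → ℝ)) ρ).setIntegral_image_emb
    (measurableEmbedding_addRight ρ) f D
  rw [← h3]
  congr 2
  ext x
  constructor
  · rintro ⟨y, hy, rfl⟩
    exact ⟨y, hy, add_comm _ _⟩
  · rintro ⟨y, hy, rfl⟩
    exact ⟨y, hy, add_comm _ _⟩

lemma torusAvgVec_add {ℓ k : ℕ} {f g : (Fin ℓ → ℝ) → (Fin k → ℝ)} (hf : Continuous f)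
    (hg : Continuous g) :
    torusAvgVec (fun θ => f θ + g θ) = torusAvgVec f + torusAvgVec g :=
  integral_add (hf.continuousOn.integrableOn_compact isCompact_Icc)
    (hg.continuousOn.integrableOn_compact isCompact_Icc)

lemma torusAvgVec_sub {ℓ k : ℕ} {f g : (Fin ℓ → ℝ) → (Fin k → ℝ)} (hf : Continuous f)
    (hg : Continuous g) :
    torusAvgVec (fun θ => f θ - g θ) = torusAvgVec f - torusAvgVec g :=
  integral_sub (hf.continuousOn.integrableOn_compact isCompact_Icc)
    (hg.continuousOn.integrableOn_compact isCompact_Icc)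

lemma torusAvgVec_partial_eq_zero {ℓ : ℕ} {Q : (Fin ℓ → ℝ) → ℝ}
    {Q' : (Fin ℓ → ℝ) → (Fin ℓ → ℝ) →L[ℝ] ℝ} (hQ : ∀ θ, HasFDerivAt Q (Q' θ) θ)
    (hQ' : Continuous Q') (hper : ZPeriodic Q) :
    torusAvgVec (fun θ j => Q' θ (Pi.single j 1)) = 0 := by
  ext j
  unfold torusAvgVec
  refine Eq.trans (eval_integral (fun j => ?_) j) (integral_partial_eq_zero hQ hQ' hper j)
  exact (hQ'.clm_apply continuous_const).continuousOn.integrableOn_compact isCompact_Icc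

/-! ### Jacobians and the Hamiltonian vector field -/

/-- The dot product as a continuous bilinear map. -/
def dotCLM (ι : Type*) [Fintype ι] : (ι → ℝ) →L[ℝ] (ι → ℝ) →L[ℝ] ℝ :=
  ∑ i, (ContinuousLinearMap.proj (R := ℝ) (φ := fun _ : ι => ℝ) i).smulRight
    (ContinuousLinearMap.proj (R := ℝ) (φ := fun _ : ι => ℝ) i)

lemma dotCLM_apply {ι : Type*} [Fintype ι] (u v : ι → ℝ) : dotCLM ι u v = u ⬝ᵥ v := by
  simp [dotCLM, dotProduct]

lemma jacobian_mulVec {ι κ : Type*} [Fintype ι] [DecidableEq ι] [Fintype κ]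
    (f : (ι → ℝ) → (κ → ℝ)) (x v : ι → ℝ) : jacobian f x *ᵥ v = fderiv ℝ f x v := by
  have : jacobian f x = LinearMap.toMatrix' (fderiv ℝ f x : (ι → ℝ) →ₗ[ℝ] (κ → ℝ)) := by
    ext i j; simp [jacobian, LinearMap.toMatrix'_apply]
  rw [this, LinearMap.toMatrix'_mulVec]; rfl

lemma jacobian_transpose_mulVec_apply {ι κ : Type*} [Fintype ι] [DecidableEq ι] [Fintype κ]
    (f : (ι → ℝ) → (κ → ℝ)) (x : ι → ℝ) (u : κ → ℝ) (j : ι) :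
    ((jacobian f x)ᵀ *ᵥ u) j = u ⬝ᵥ fderiv ℝ f x (Pi.single j 1) := by
  simp [mulVec, dotProduct, jacobian, mul_comm]

lemma dotProduct_jacobian_transpose_mulVec {ι κ : Type*} [Fintype ι] [DecidableEq ι] [Fintype κ]
    (f : (ι → ℝ) → (κ → ℝ)) (x v : ι → ℝ) (u : κ → ℝ) :
    v ⬝ᵥ ((jacobian f x)ᵀ *ᵥ u) = u ⬝ᵥ fderiv ℝ f x v := by
  rw [← jacobian_mulVec, dotProduct_mulVec, vecMul_transpose, dotProduct_comm]

lemma drow_dotProduct {ι : Type*} [Fintype ι] [DecidableEq ι] (f : (ι → ℝ) → ℝ) (x v : ι → ℝ) :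
    drow f x ⬝ᵥ v = fderiv ℝ f x v := by
  conv_rhs => rw [pi_eq_sum_univ' v, map_sum]
  simp [drow, dotProduct, mul_comm]

lemma contDiffOn_det {E ι : Type*} [NormedAddCommGroup E] [NormedSpace ℝ E] [Fintype ι]
    [DecidableEq ι] {k : WithTop ℕ∞} {V : Set E} {A : E → Matrix ι ι ℝ}
    (hA : ∀ i j, ContDiffOn ℝ k (fun z => A z i j) V) : ContDiffOn ℝ k (fun z => (A z).det) V := by
  simp only [det_apply']
  exact ContDiffOn.sum fun σ _ => contDiffOn_const.mul (contDiffOn_prod fun i _ => hA _ _)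

lemma contDiffOn_inv_mulVec {E ι : Type*} [NormedAddCommGroup E] [NormedSpace ℝ E] [Fintype ι]
    [DecidableEq ι] {k : WithTop ℕ∞} {V : Set E} {A : E → Matrix ι ι ℝ} {v : E → ι → ℝ}
    (hA : ∀ i j, ContDiffOn ℝ k (fun z => A z i j) V) (hAu : ∀ z ∈ V, IsUnit (A z))
    (hv : ContDiffOn ℝ k v V) : ContDiffOn ℝ k (fun z => (A z)⁻¹ *ᵥ v z) V := by
  have hinv : ∀ i j, ContDiffOn ℝ k (fun z => (A z)⁻¹ i j) V := by
    intro i j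
    simp only [Matrix.inv_def, Matrix.smul_apply, smul_eq_mul, Ring.inverse_eq_inv']
    refine ((contDiffOn_det hA).inv fun z hz =>
      ((Matrix.isUnit_iff_isUnit_det _).1 (hAu z hz)).ne_zero).mul ?_
    simp only [adjugate_apply]
    refine contDiffOn_det fun a b => ?_
    by_cases h : a = j
    · subst h; simpa using contDiffOn_const
    · simpa [updateRow_ne h] using hA a b
  rw [contDiffOn_pi]
  intro i
  simp only [mulVec, dotProduct]
  exact ContDiffOn.sum fun j _ => (hinv i j).mul (contDiffOn_pi.1 hv j)

lemma contDiffOn_jacobian {ι κ : Type*} [Fintype ι] [DecidableEq ι] [Fintype κ]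
    {f : (ι → ℝ) → (κ → ℝ)} {V : Set (ι → ℝ)} (hV : IsOpen V) (hf : ContDiffOn ℝ 3 f V)
    (i : κ) (j : ι) : ContDiffOn ℝ 2 (fun z => jacobian f z i j) V :=
  contDiffOn_pi.1 ((hf.fderiv_of_isOpen hV (by norm_num)).clm_apply contDiffOn_const) i

lemma contDiffOn_drow {ι : Type*} [Fintype ι] [DecidableEq ι]
    {f : (ι → ℝ) → ℝ} {V : Set (ι → ℝ)} (hV : IsOpen V) (hf : ContDiffOn ℝ 3 f V) :
    ContDiffOn ℝ 2 (drow f) V :=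
  contDiffOn_pi.2 fun _ => (hf.fderiv_of_isOpen hV (by norm_num)).clm_apply contDiffOn_const

/-! ### Taylor increments along a segment -/

/-- The integral forms of the zeroth and first order Taylor remainders of `a` at `w`. -/
lemma taylor_increments {E F : Type*} [NormedAddCommGroup E] [NormedSpace ℝ E]
    [NormedAddCommGroup F] [NormedSpace ℝ F] [CompleteSpace F] {a : E → F} {V : Set E}
    (hV : IsOpen V) (ha : ContDiffOn ℝ 2 a V) {w e : E}
    (hseg : ∀ s ∈ Set.Icc (0 : ℝ) 1, w + s • e ∈ V) :
    (∫ s in (0 : ℝ)..1, fderiv ℝ a (w + s • e) e) = a (w + e) - a w ∧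
    (∫ s in (0 : ℝ)..1, (1 - s) • iteratedFDeriv ℝ 2 a (w + s • e) ![e, e]) =
      a (w + e) - a w - fderiv ℝ a w e := by
  have hDa : ContDiffOn ℝ 1 (fderiv ℝ a) V := ha.fderiv_of_isOpen hV (by norm_num)
  have hDDa : ContinuousOn (fderiv ℝ (fderiv ℝ a)) V :=
    (hDa.fderiv_of_isOpen (m := 0) hV (by norm_num)).continuousOn
  have hline : ∀ s : ℝ, HasDerivAt (fun s : ℝ => w + s • e) e s := fun s => by
    simpa using ((hasDerivAt_id s).smul_const e).const_add w
  have hlc : Continuous fun s : ℝ => w + s • e := by fun_prop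
  have h1 : ∀ s ∈ Set.Icc (0 : ℝ) 1,
      HasDerivAt (fun s : ℝ => a (w + s • e)) (fderiv ℝ a (w + s • e) e) s := fun s hs =>
    HasFDerivAt.comp_hasDerivAt s ((ha.differentiableOn (by norm_num)).differentiableAt
      (hV.mem_nhds (hseg s hs))).hasFDerivAt (hline s)
  have h2 : ∀ s ∈ Set.Icc (0 : ℝ) 1, HasDerivAt (fun s : ℝ => fderiv ℝ a (w + s • e) e)
      (fderiv ℝ (fderiv ℝ a) (w + s • e) e e) s := fun s hs => by
    have hd : HasFDerivAt (fderiv ℝ a) (fderiv ℝ (fderiv ℝ a) (w + s • e)) (w + s • e) :=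
      ((hDa.differentiableOn (by norm_num)).differentiableAt
        (hV.mem_nhds (hseg s hs))).hasFDerivAt
    have hc : HasDerivAt (fun s : ℝ => fderiv ℝ a (w + s • e))
        (fderiv ℝ (fderiv ℝ a) (w + s • e) e) s := hd.comp_hasDerivAt s (hline s)
    exact (hc.clm_apply (hasDerivAt_const s e)).congr_deriv (by simp)
  have c1 : ContinuousOn (fun s : ℝ => fderiv ℝ a (w + s • e) e) (Set.uIcc 0 1) := by
    rw [Set.uIcc_of_le zero_le_one]
    exact (hDa.continuousOn.comp hlc.continuousOn hseg).clm_apply continuousOn_const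
  have c2 : ContinuousOn (fun s : ℝ => (1 - s) • fderiv ℝ (fderiv ℝ a) (w + s • e) e e)
      (Set.uIcc 0 1) := by
    rw [Set.uIcc_of_le zero_le_one]
    exact (continuousOn_const.sub continuousOn_id).smul
      (((hDDa.comp hlc.continuousOn hseg).clm_apply continuousOn_const).clm_apply
        continuousOn_const)
  have I1 := intervalIntegral.integral_eq_sub_of_hasDerivAt
    (fun s hs => h1 s (by rwa [Set.uIcc_of_le zero_le_one] at hs)) c1.intervalIntegrable
  have I2 := intervalIntegral.integral_eq_sub_of_hasDerivAt
    (f := fun s : ℝ => (1 - s) • fderiv ℝ a (w + s • e) e + a (w + s • e))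
    (f' := fun s : ℝ => (1 - s) • fderiv ℝ (fderiv ℝ a) (w + s • e) e e) (a := 0) (b := 1)
    (fun s hs => by
      rw [Set.uIcc_of_le zero_le_one] at hs
      have := (((hasDerivAt_id s).const_sub 1).smul (h2 s hs)).add (h1 s hs)
      refine this.congr_deriv ?_
      simp) c2.intervalIntegrable
  refine ⟨by simpa using I1, ?_⟩
  simp only [iteratedFDeriv_two_apply, Matrix.cons_val_zero, Matrix.cons_val_one]
  rw [I2]
  simp only [sub_self, zero_smul, zero_add, sub_zero, one_smul, add_zero]
  abel

/-! ### One step of the multiple torus -/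

/-- The identity for one pair of consecutive tori. Here `g` is an exact map with primitive `P`,
and `e` is the error made in sending the torus `K₀` to `K₁` translated by `ρ`. The right-hand side
is the difference of the average actions `⟨DKᵀ a(K)⟩` of the two tori. -/
lemma average_one_step {ℓ N : ℕ} {U : Set (Fin N → ℝ)} (hU : IsOpen U)
    {a g : (Fin N → ℝ) → (Fin N → ℝ)} (ha : ContDiffOn ℝ 2 a U) (hg : ContDiffOn ℝ 1 g U)
    {P : (Fin N → ℝ) → ℝ}
    (hP : ∀ z ∈ U, HasFDerivAt P
      ((dotCLM (Fin N) (a (g z))).comp (fderiv ℝ g z) - dotCLM (Fin N) (a z)) z)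
    {K₀ K₁ e : (Fin ℓ → ℝ) → (Fin N → ℝ)} (hK₀ : ContDiff ℝ 1 K₀) (hK₁ : ContDiff ℝ 1 K₁)
    (hper₀ : ZPeriodic K₀) (hper₁ : ZPeriodic K₁) (hU₀ : ∀ θ, K₀ θ ∈ U) (hU₁ : ∀ θ, K₁ θ ∈ U)
    (hgU : ∀ z ∈ U, g z ∈ U) (ρ : Fin ℓ → ℝ) (he : ∀ θ, e θ = g (K₀ θ) - K₁ (θ + ρ)) :
    torusAvgVec (fun θ => -((jacobian K₁ (θ + ρ))ᵀ *ᵥ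
        (((jacobian a (K₁ (θ + ρ)))ᵀ - jacobian a (K₁ (θ + ρ))) *ᵥ e θ))) +
      torusAvgVec (fun θ => (jacobian e θ)ᵀ *ᵥ (a (K₁ (θ + ρ) + e θ) - a (K₁ (θ + ρ))) +
        (jacobian K₁ (θ + ρ))ᵀ *ᵥ (a (K₁ (θ + ρ) + e θ) - a (K₁ (θ + ρ)) -
          fderiv ℝ a (K₁ (θ + ρ)) (e θ))) =
    torusAvgVec (fun θ => (jacobian K₀ θ)ᵀ *ᵥ a (K₀ θ)) -
      torusAvgVec (fun θ => (jacobian K₁ θ)ᵀ *ᵥ a (K₁ θ)) := by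
  have hy : ∀ θ, K₁ (θ + ρ) + e θ = g (K₀ θ) := fun θ => by rw [he]; abel
  simp only [hy]
  -- derivatives of the ingredients
  have dK₀ : ∀ θ, HasFDerivAt K₀ (fderiv ℝ K₀ θ) θ := fun θ =>
    (hK₀.differentiable (by norm_num) θ).hasFDerivAt
  have dw : ∀ θ, HasFDerivAt (fun θ => K₁ (θ + ρ)) (fderiv ℝ K₁ (θ + ρ)) θ := fun θ => by
    rw [hasFDerivAt_comp_add_right]
    exact (hK₁.differentiable (by norm_num) (θ + ρ)).hasFDerivAt
  have dg : ∀ θ, HasFDerivAt (fun θ => g (K₀ θ)) ((fderiv ℝ g (K₀ θ)).comp (fderiv ℝ K₀ θ)) θ :=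
    fun θ => ((hg.differentiableOn (by norm_num)).differentiableAt
      (hU.mem_nhds (hU₀ θ))).hasFDerivAt.comp θ (dK₀ θ)
  have de : ∀ θ, HasFDerivAt e
      ((fderiv ℝ g (K₀ θ)).comp (fderiv ℝ K₀ θ) - fderiv ℝ K₁ (θ + ρ)) θ := fun θ => by
    rw [show e = fun θ => g (K₀ θ) - K₁ (θ + ρ) from funext he]
    exact (dg θ).sub (dw θ)
  have daw : ∀ θ, HasFDerivAt (fun θ => a (K₁ (θ + ρ)))
      ((fderiv ℝ a (K₁ (θ + ρ))).comp (fderiv ℝ K₁ (θ + ρ))) θ := fun θ =>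
    ((ha.differentiableOn (by norm_num)).differentiableAt
      (hU.mem_nhds (hU₁ (θ + ρ)))).hasFDerivAt.comp θ (dw θ)
  -- continuity of the ingredients
  have cK₀ : Continuous K₀ := hK₀.continuous
  have cK₁ : Continuous K₁ := hK₁.continuous
  have cDK₀ : Continuous (fderiv ℝ K₀) := hK₀.continuous_fderiv (by norm_num)
  have cDK₁ : Continuous (fderiv ℝ K₁) := hK₁.continuous_fderiv (by norm_num)
  have cg : Continuous fun θ => g (K₀ θ) := hg.continuousOn.comp_continuous cK₀ hU₀
  have cDg : Continuous fun θ => fderiv ℝ g (K₀ θ) :=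
    (hg.continuousOn_fderiv_of_isOpen hU (by norm_num)).comp_continuous cK₀ hU₀
  have ce : Continuous e := continuous_iff_continuousAt.2 fun θ => (de θ).continuousAt
  have ca₀ : Continuous fun θ => a (K₀ θ) := ha.continuousOn.comp_continuous cK₀ hU₀
  have ca₁ : Continuous fun θ => a (K₁ θ) := ha.continuousOn.comp_continuous cK₁ hU₁
  have cag : Continuous fun θ => a (g (K₀ θ)) :=
    ha.continuousOn.comp_continuous cg fun θ => hgU _ (hU₀ θ)
  have cDa₁ : Continuous fun θ => fderiv ℝ a (K₁ θ) :=
    (ha.continuousOn_fderiv_of_isOpen hU (by norm_num)).comp_continuous cK₁ hU₁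
  have cs : Continuous fun θ : Fin ℓ → ℝ => θ + ρ := by fun_prop
  have caw : Continuous fun θ => a (K₁ (θ + ρ)) := ca₁.comp cs
  have cDaw : Continuous fun θ => fderiv ℝ a (K₁ (θ + ρ)) := cDa₁.comp cs
  have cDw : Continuous fun θ => fderiv ℝ K₁ (θ + ρ) := cDK₁.comp cs
  -- the periodic function whose differential is the total-derivative part
  let Q : (Fin ℓ → ℝ) → ℝ := fun θ => P (K₀ θ) - dotCLM (Fin N) (a (K₁ (θ + ρ))) (e θ)
  let Q' : (Fin ℓ → ℝ) → (Fin ℓ → ℝ) →L[ℝ] ℝ := fun θ =>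
    ((dotCLM (Fin N) (a (g (K₀ θ)))).comp (fderiv ℝ g (K₀ θ)) -
      dotCLM (Fin N) (a (K₀ θ))).comp (fderiv ℝ K₀ θ) -
    ((dotCLM (Fin N) (a (K₁ (θ + ρ)))).comp
        ((fderiv ℝ g (K₀ θ)).comp (fderiv ℝ K₀ θ) - fderiv ℝ K₁ (θ + ρ)) +
      ((dotCLM (Fin N)).comp
        ((fderiv ℝ a (K₁ (θ + ρ))).comp (fderiv ℝ K₁ (θ + ρ)))).flip (e θ))
  have hQ : ∀ θ, HasFDerivAt Q (Q' θ) θ := fun θ =>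
    ((hP _ (hU₀ θ)).comp θ (dK₀ θ)).sub
      (((dotCLM (Fin N)).hasFDerivAt.comp θ (daw θ)).clm_apply (de θ))
  have hQ' : Continuous Q' := by
    have h1 : Continuous fun θ => ((dotCLM (Fin N)).comp
        ((fderiv ℝ a (K₁ (θ + ρ))).comp (fderiv ℝ K₁ (θ + ρ)))).flip :=
      (ContinuousLinearMap.flipₗᵢ ℝ (Fin ℓ → ℝ) (Fin N → ℝ) ℝ).continuous.comp
        (continuous_const.clm_comp (cDaw.clm_comp cDw))
    have h2 : ∀ {f : (Fin ℓ → ℝ) → Fin N → ℝ}, Continuous f →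
        Continuous fun θ => dotCLM (Fin N) (f θ) := fun hf => (dotCLM (Fin N)).continuous.comp hf
    exact ((((h2 cag).clm_comp cDg).sub (h2 ca₀)).clm_comp cDK₀).sub
      (((h2 caw).clm_comp ((cDg.clm_comp cDK₀).sub cDw)).add (h1.clm_apply ce))
  have hperw : ∀ (θ : Fin ℓ → ℝ) (k : Fin ℓ → ℤ),
      K₁ (θ + (fun i => (k i : ℝ)) + ρ) = K₁ (θ + ρ) := fun θ k => by
    rw [add_right_comm, hper₁]
  have hQper : ZPeriodic Q := fun θ k => by
    simp only [Q, he, hperw, hper₀ θ k]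
  have hc₁per : ZPeriodic fun θ => (jacobian K₁ θ)ᵀ *ᵥ a (K₁ θ) := fun θ k => by
    have : jacobian K₁ (θ + fun i => (k i : ℝ)) = jacobian K₁ θ := by
      unfold jacobian
      rw [← fderiv_comp_add_right, show (fun x => K₁ (x + fun i => (k i : ℝ))) = K₁ from
        funext fun x => hper₁ x k]
    simp only [this, hper₁ θ k]
  -- continuity of vectors of the form `DFᵀ u`
  have cT : ∀ {f : (Fin ℓ → ℝ) → (Fin N → ℝ)} {s : (Fin ℓ → ℝ) → (Fin ℓ → ℝ)}
      {u : (Fin ℓ → ℝ) → (Fin N → ℝ)}, Continuous (fun θ => fderiv ℝ f (s θ)) → Continuous u →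
      Continuous fun θ => (jacobian f (s θ))ᵀ *ᵥ u θ := by
    intro f s u hf hu
    refine continuous_pi fun j => ?_
    simp only [jacobian_transpose_mulVec_apply, ← dotCLM_apply]
    exact ((dotCLM (Fin N)).continuous.comp hu).clm_apply (hf.clm_apply continuous_const)
  have cc₀ : Continuous fun θ => (jacobian K₀ θ)ᵀ *ᵥ a (K₀ θ) := cT (s := id) cDK₀ ca₀
  have cc₁ : Continuous fun θ => (jacobian K₁ θ)ᵀ *ᵥ a (K₁ θ) := cT (s := id) cDK₁ ca₁
  have cde : Continuous (fderiv ℝ e) := by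
    rw [funext fun θ => (de θ).fderiv]
    exact (cDg.clm_comp cDK₀).sub cDw
  have cr : Continuous fun θ => (jacobian e θ)ᵀ *ᵥ (a (g (K₀ θ)) - a (K₁ (θ + ρ))) +
      (jacobian K₁ (θ + ρ))ᵀ *ᵥ (a (g (K₀ θ)) - a (K₁ (θ + ρ)) -
        fderiv ℝ a (K₁ (θ + ρ)) (e θ)) :=
    (cT (s := id) cde (cag.sub caw)).add (cT cDw ((cag.sub caw).sub (cDaw.clm_apply ce)))
  have cdQ : Continuous fun θ => (fun j => Q' θ (Pi.single j 1) : Fin ℓ → ℝ) :=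
    continuous_pi fun j => hQ'.clm_apply continuous_const
  have cc₁s : Continuous fun θ => (jacobian K₁ (θ + ρ))ᵀ *ᵥ a (K₁ (θ + ρ)) := cc₁.comp cs
  have key : (fun θ => -((jacobian K₁ (θ + ρ))ᵀ *ᵥ
        (((jacobian a (K₁ (θ + ρ)))ᵀ - jacobian a (K₁ (θ + ρ))) *ᵥ e θ))) = fun θ =>
      (((fun j => Q' θ (Pi.single j 1)) + (jacobian K₀ θ)ᵀ *ᵥ a (K₀ θ)) -
        (jacobian K₁ (θ + ρ))ᵀ *ᵥ a (K₁ (θ + ρ))) -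
      ((jacobian e θ)ᵀ *ᵥ (a (g (K₀ θ)) - a (K₁ (θ + ρ))) +
        (jacobian K₁ (θ + ρ))ᵀ *ᵥ (a (g (K₀ θ)) - a (K₁ (θ + ρ)) -
          fderiv ℝ a (K₁ (θ + ρ)) (e θ))) := by
    funext θ
    ext j
    have h1 := dotProduct_jacobian_transpose_mulVec a (K₁ (θ + ρ))
      (fderiv ℝ K₁ (θ + ρ) (Pi.single j 1)) (e θ)
    rw [dotProduct_comm] at h1
    simp only [Pi.neg_apply, Pi.add_apply, Pi.sub_apply, jacobian_transpose_mulVec_apply,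
      sub_mulVec, sub_dotProduct, h1, jacobian_mulVec, (de θ).fderiv, Q',
      _root_.sub_apply, _root_.add_apply,
      ContinuousLinearMap.comp_apply, ContinuousLinearMap.flip_apply, dotCLM_apply,
      dotProduct_sub]
    rw [dotProduct_comm (e θ)]
    ring
  have cA : Continuous fun θ => (fun j => Q' θ (Pi.single j 1)) + (jacobian K₀ θ)ᵀ *ᵥ a (K₀ θ) :=
    cdQ.add cc₀
  have cB : Continuous fun θ => (fun j => Q' θ (Pi.single j 1)) + (jacobian K₀ θ)ᵀ *ᵥ a (K₀ θ) -
      (jacobian K₁ (θ + ρ))ᵀ *ᵥ a (K₁ (θ + ρ)) := cA.sub cc₁s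
  rw [key, torusAvgVec_sub cB cr, sub_add_cancel, torusAvgVec_sub cA cc₁s, torusAvgVec_add cdQ cc₀,
    torusAvgVec_partial_eq_zero hQ hQ' hQper, zero_add]
  congr 1
  exact setIntegral_Icc_shift hc₁per ρ

/-- For an approximately invariant multiple torus with errors `E_i`
in an exact symplectic structure, the sum of the averages of
`η_i^{31}(θ) = −DK_{i+1}(θ+ω/m)ᵀ Ω(K_{i+1}(θ+ω/m)) E_i(θ)` equals minus the sum of
the averages of `DE_i(θ)ᵀ Δ¹a_i(θ) + DK_{i+1}(θ+ω/m)ᵀ Δ²a_i(θ)`; in particular it is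
quadratically small in the errors and their derivatives. -/
theorem average_eta31_quadratically_small
    (n : ℕ) (U : Set (Fin (2 * n) → ℝ)) (hU : IsOpen U)
    -- the action form and the exact symplectic structure
    (a : (Fin (2 * n) → ℝ) → (Fin (2 * n) → ℝ))
    (ha : ContDiffOn ℝ (⊤ : ℕ∞) a U)
    (Ω : (Fin (2 * n) → ℝ) → Matrix (Fin (2 * n)) (Fin (2 * n)) ℝ)
    (hΩ : ∀ z, Ω z = (jacobian a z)ᵀ - jacobian a z)
    (hΩinv : ∀ z ∈ U, IsUnit (Ω z))
    -- the Hamiltonian and its vector field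
    (H : (Fin (2 * n) → ℝ) → ℝ) (hH : ContDiffOn ℝ (⊤ : ℕ∞) H U)
    (X : (Fin (2 * n) → ℝ) → (Fin (2 * n) → ℝ))
    (hX : ∀ z, X z = (Ω z)⁻¹ *ᵥ drow H z)
    -- the flow of the Hamiltonian vector field, assumed complete on U
    (φ : ℝ → (Fin (2 * n) → ℝ) → (Fin (2 * n) → ℝ))
    (hφU : ∀ (t : ℝ), ∀ z ∈ U, φ t z ∈ U)
    (hφ0 : ∀ z ∈ U, φ 0 z = z)
    (hφode : ∀ z ∈ U, ∀ t : ℝ, HasDerivAt (fun s => φ s z) (X (φ t z)) t)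
    -- each time-t map is exact symplectic, with primitive function p_t
    (p : ℝ → (Fin (2 * n) → ℝ) → ℝ)
    (hp : ∀ (t : ℝ), ∀ z ∈ U,
      a (φ t z) ᵥ* jacobian (φ t) z - a z = drow (p t) z)
    -- the multiple torus (indices mod m) and its invariance errors
    (m : ℕ) (hm : 1 ≤ m) (T : ℝ) (hT : 0 < T) (ω : Fin (n - 2) → ℝ)
    (K : ℕ → (Fin (n - 2) → ℝ) → (Fin (2 * n) → ℝ))
    (hKmod : ∀ i, K (i + m) = K i)
    (hKsm : ∀ i, ContDiff ℝ (⊤ : ℕ∞) (K i)) (hKper : ∀ i, ZPeriodic (K i))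
    (hKU : ∀ i θ, K i θ ∈ U)
    (E : ℕ → (Fin (n - 2) → ℝ) → (Fin (2 * n) → ℝ))
    (hE : ∀ (i : ℕ) (θ : Fin (n - 2) → ℝ),
      E i θ = φ (T / m) (K i θ) - K (i + 1) (θ + (m : ℝ)⁻¹ • ω))
    -- the segments joining the torus to the corrected points stay in U
    (hseg : ∀ (i : ℕ) (θ : Fin (n - 2) → ℝ), ∀ s ∈ Set.Icc (0 : ℝ) 1,
      K (i + 1) (θ + (m : ℝ)⁻¹ • ω) + s • E i θ ∈ U)
    -- the right-hand sides η_i^{31}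
    (η31 : ℕ → (Fin (n - 2) → ℝ) → (Fin (n - 2) → ℝ))
    (hη31 : ∀ (i : ℕ) (θ : Fin (n - 2) → ℝ),
      η31 i θ = -((jacobian (K (i + 1)) (θ + (m : ℝ)⁻¹ • ω))ᵀ *ᵥ
        (Ω (K (i + 1) (θ + (m : ℝ)⁻¹ • ω)) *ᵥ E i θ)))
    -- the first and second order Taylor increments of the action form
    (Δ1 : ℕ → (Fin (n - 2) → ℝ) → (Fin (2 * n) → ℝ))
    (hΔ1 : ∀ (i : ℕ) (θ : Fin (n - 2) → ℝ),
      Δ1 i θ = ∫ s in (0:ℝ)..1,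
        jacobian a (K (i + 1) (θ + (m : ℝ)⁻¹ • ω) + s • E i θ) *ᵥ E i θ)
    (Δ2 : ℕ → (Fin (n - 2) → ℝ) → (Fin (2 * n) → ℝ))
    (hΔ2 : ∀ (i : ℕ) (θ : Fin (n - 2) → ℝ),
      Δ2 i θ = ∫ s in (0:ℝ)..1, (1 - s) •
        iteratedFDeriv ℝ 2 a (K (i + 1) (θ + (m : ℝ)⁻¹ • ω) + s • E i θ)
          ![E i θ, E i θ]) :
    ∑ i ∈ Finset.range m, torusAvgVec (η31 i) =
      -∑ i ∈ Finset.range m, torusAvgVec (fun θ =>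
        (jacobian (E i) θ)ᵀ *ᵥ Δ1 i θ +
        (jacobian (K (i + 1)) (θ + (m : ℝ)⁻¹ • ω))ᵀ *ᵥ Δ2 i θ) := by
  have ha2 : ContDiffOn ℝ 2 a U := ha.of_le (WithTop.coe_le_coe.2 (le_top : (2 : ℕ∞) ≤ ⊤))
  have ha3 : ContDiffOn ℝ 3 a U := ha.of_le (WithTop.coe_le_coe.2 (le_top : (3 : ℕ∞) ≤ ⊤))
  have hH2 : ContDiffOn ℝ 2 H U := hH.of_le (WithTop.coe_le_coe.2 (le_top : (2 : ℕ∞) ≤ ⊤))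
  have hH3 : ContDiffOn ℝ 3 H U := hH.of_le (WithTop.coe_le_coe.2 (le_top : (3 : ℕ∞) ≤ ⊤))
  have hX2 : ContDiffOn ℝ 2 X U := by
    rw [show X = fun z => (Ω z)⁻¹ *ᵥ drow H z from funext hX]
    refine contDiffOn_inv_mulVec (fun i j => ?_) hΩinv (contDiffOn_drow hU hH3)
    simp only [hΩ, Matrix.sub_apply, Matrix.transpose_apply]
    exact (contDiffOn_jacobian hU ha3 j i).sub (contDiffOn_jacobian hU ha3 i j)
  -- the action one-form
  let α : (Fin (2 * n) → ℝ) → (Fin (2 * n) → ℝ) →L[ℝ] ℝ := fun z => dotCLM (Fin (2 * n)) (a z)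
  have hα : ContDiffOn ℝ 2 α U := (dotCLM (Fin (2 * n))).contDiff.comp_contDiffOn ha2
  have hDα : ∀ z ∈ U, ∀ u v, fderiv ℝ α z u v = fderiv ℝ a z u ⬝ᵥ v := by
    intro z hz u v
    have h : HasFDerivAt α ((dotCLM (Fin (2 * n))).comp (fderiv ℝ a z)) z :=
      (dotCLM (Fin (2 * n))).hasFDerivAt.comp z ((ha2.differentiableOn
        (by norm_num)).differentiableAt (hU.mem_nhds hz)).hasFDerivAt
    rw [h.fderiv, ContinuousLinearMap.comp_apply, dotCLM_apply]
  have hXH : ∀ z ∈ U, ∀ w, fderiv ℝ α z w (X z) - fderiv ℝ α z (X z) w = fderiv ℝ H z w := by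
    intro z hz w
    have hΩX : Ω z *ᵥ X z = drow H z := by
      rw [hX, mulVec_mulVec, Matrix.mul_nonsing_inv _
        ((Matrix.isUnit_iff_isUnit_det _).1 (hΩinv z hz)), one_mulVec]
    rw [← drow_dotProduct, ← hΩX, hΩ, sub_mulVec, sub_dotProduct, jacobian_mulVec,
      dotProduct_comm _ w, dotProduct_jacobian_transpose_mulVec, hDα z hz, hDα z hz,
      dotProduct_comm (X z)]
  have hτ : 0 ≤ T / m := by positivity
  have hg : ContDiffOn ℝ 1 (φ (T / m)) U :=
    flow_contDiffOn hU hX2 hτ (fun z t => φ t z) hφ0 fun z hz =>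
      ⟨fun t _ => hφU t z hz, fun t _ => (hφode z hz t).hasDerivWithinAt⟩
  obtain ⟨P, hP⟩ := flow_exact hU hX2 hα hH2 hXH hτ (fun z t => φ t z) hφ0
    (fun z hz t => hφU t z hz) hφode
  have hstep : ∀ i, torusAvgVec (η31 i) + torusAvgVec (fun θ =>
        (jacobian (E i) θ)ᵀ *ᵥ Δ1 i θ +
        (jacobian (K (i + 1)) (θ + (m : ℝ)⁻¹ • ω))ᵀ *ᵥ Δ2 i θ) =
      torusAvgVec (fun θ => (jacobian (K i) θ)ᵀ *ᵥ a (K i θ)) -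
        torusAvgVec (fun θ => (jacobian (K (i + 1)) θ)ᵀ *ᵥ a (K (i + 1) θ)) := by
    intro i
    have hK1 : ∀ i, ContDiff ℝ 1 (K i) := fun i => (hKsm i).of_le (by exact_mod_cast le_top)
    rw [← average_one_step hU ha2 hg hP (hK1 i) (hK1 (i + 1)) (hKper i) (hKper (i + 1)) (hKU i)
      (hKU (i + 1)) (hφU (T / m)) ((m : ℝ)⁻¹ • ω) (hE i)]
    congr 2
    · funext θ
      rw [hη31, hΩ]
    · funext θ
      have ht := taylor_increments hU ha2 (hseg i θ)
      rw [hΔ1, hΔ2, ht.2]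
      simp only [jacobian_mulVec]
      rw [ht.1]
  rw [← sub_eq_zero, sub_neg_eq_add, ← Finset.sum_add_distrib, Finset.sum_congr rfl fun i _ =>
    hstep i, Finset.sum_range_sub' fun i => torusAvgVec fun θ => (jacobian (K i) θ)ᵀ *ᵥ a (K i θ)]
  have h0 : K m = K 0 := by simpa using hKmod 0
  rw [h0, sub_self]
end
end
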